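/- Let π : (X',T') → (X,T) be a principal factor map between topological dynamical systems, and assume h_top(T,X) < ∞. Then: (1) (X',T') is asymptotically h-expansive if and only if (X,T) is asymptotically h-expansive; (2) (X',T') is lowerable (respectively hereditarily lowerable, respectively HUL) if and only if (X,T) is lowerable (respectively hereditarily lowerable, respectively HUL). -/

import Mathlib

open Filter Set Metric MeasureTheory
open scoped ENNReal Topology

noncomputable section

variable {X Y : Type*}

def IsSep [PseudoMetricSpace X] (T : X → X) (n : ℕ) (ε : ℝ) (E : Set X) : Prop :=
  E.Pairwise fun x y => ∃ i < n, ε < dist (T^[i] x) (T^[i] y)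

def sepMaxCard [PseudoMetricSpace X] (T : X → X) (n : ℕ) (ε : ℝ) (K : Set X) : ℝ≥0∞ :=
  ⨆ (E : Finset X) (_ : ↑E ⊆ K ∧ IsSep T n ε (↑E : Set X)), (E.card : ℝ≥0∞)

def sepEnt [PseudoMetricSpace X] (T : X → X) (ε : ℝ) (K : Set X) : EReal :=
  Filter.atTop.limsup fun n : ℕ => ENNReal.log (sepMaxCard T n ε K) / (n : EReal)

def subEnt [PseudoMetricSpace X] (T : X → X) (K : Set X) : EReal :=
  ⨆ (ε : ℝ) (_ : 0 < ε), sepEnt T ε K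

/-- `(X,T)` is lowerable. -/
def Lowerable [PseudoMetricSpace X] (T : X → X) : Prop :=
  ∀ h : EReal, 0 ≤ h → h ≤ subEnt T (univ : Set X) →
    ∃ K : Set X, K.Nonempty ∧ IsCompact K ∧ subEnt T K = h

/-- `(X,T)` is hereditarily lowerable. -/
def HerLowerable [PseudoMetricSpace X] (T : X → X) : Prop :=
  ∀ K : Set X, K.Nonempty → IsCompact K → ∀ h : EReal, 0 ≤ h → h ≤ subEnt T K →
    ∃ K' : Set X, K' ⊆ K ∧ K'.Nonempty ∧ IsCompact K' ∧ subEnt T K' = h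

/-- `(X,T)` is hereditarily uniformly lowerable: the lowering subset can moreover be chosen
with at most one limit (accumulation) point. -/
def HUL [PseudoMetricSpace X] (T : X → X) : Prop :=
  ∀ K : Set X, K.Nonempty → IsCompact K → ∀ h : EReal, 0 ≤ h → h ≤ subEnt T K →
    ∃ K' : Set X, K' ⊆ K ∧ K'.Nonempty ∧ IsCompact K' ∧ subEnt T K' = h ∧
      {x | AccPt x (𝓟 K')}.Subsingleton

/-- `Φ_ε(x) = {y : d(T^n x, T^n y) ≤ ε for all n ≥ 0}`. -/
def Phi [PseudoMetricSpace X] (T : X → X) (ε : ℝ) (x : X) : Set X :=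
  {y | ∀ n : ℕ, dist (T^[n] x) (T^[n] y) ≤ ε}

/-- `h*_T(ε) = sup_x h(T, Φ_ε(x))`. -/
def hStar [PseudoMetricSpace X] (T : X → X) (ε : ℝ) : EReal :=
  ⨆ x : X, subEnt T (Phi T ε x)

/-- `(X,T)` is asymptotically `h`-expansive: `h*_T(ε) → 0` as `ε → 0+`. -/
def AsympHExpansive [PseudoMetricSpace X] (T : X → X) : Prop :=
  Tendsto (fun ε : ℝ => hStar T ε) (𝓝[>] 0) (𝓝 (0 : EReal))

/-- `T^n` for `n : ℤ`, for a homeomorphism `T`. -/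
def iterZ [TopologicalSpace X] (T : X ≃ₜ X) : ℤ → X → X
  | Int.ofNat n => (⇑T)^[n]
  | Int.negSucc n => (⇑T.symm)^[n + 1]

/-- `T` is expansive with expansive constant `δ`. -/
def ExpansiveWith [MetricSpace X] (T : X ≃ₜ X) (δ : ℝ) : Prop :=
  ∀ x y : X, x ≠ y → ∃ n : ℤ, δ < dist (iterZ T n x) (iterZ T n y)

/-- `K ⪰ 𝒲` : `K` is contained in some member of the family `𝒲`. -/
def Refines (K : Set X) (W : Finset (Set X)) : Prop := ∃ A ∈ W, K ⊆ A

/-- The join `U ∨ V` of two finite covers. -/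
def covJoin (U V : Finset (Set X)) : Finset (Set X) :=
  letI := Classical.decEq (Set X)
  (U ×ˢ V).image fun p => p.1 ∩ p.2

/-- `dynCov T U n = U_0^{n-1} = ⋁_{i=0}^{n-1} T^{-i} U` (with `U_0^{-1} = {univ}`). -/
def dynCov (T : X → X) (U : Finset (Set X)) : ℕ → Finset (Set X)
  | 0 => {(univ : Set X)}
  | n + 1 =>
      letI := Classical.decEq (Set X)
      covJoin (dynCov T U n) (U.image fun A => T^[n] ⁻¹' A)

/-- `n_{T,U}(K)`: `0` if `K ⋠ U`; `+∞` if `T^i K ⪰ U` for all `i`; otherwise the largest `j`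
with `T^i K ⪰ U` for all `0 ≤ i ≤ j-1`. -/
def nTU (T : X → X) (U : Finset (Set X)) (K : Set X) : ℕ∞ :=
  ⨆ (j : ℕ) (_ : ∀ i < j, Refines (T^[i] '' K) U), (j : ℕ∞)

/-- `e^{-λ n}` for `n : ℕ∞`, valued in `ℝ≥0∞` (with the conventions `e^{-λ·∞} = 0` for `λ > 0`,
`= 1` for `λ = 0` and `= ∞` for `λ < 0`). -/
def expWeight (lam : ℝ) (n : ℕ∞) : ℝ≥0∞ :=
  if n = ⊤ then (if 0 < lam then 0 else if lam = 0 then 1 else ⊤)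
  else ENNReal.ofReal (Real.exp (-(lam * (n.toNat : ℝ))))

/-- `m_{T,U}(K,λ,k)`: the infimum of `∑_{E ∈ 𝓔} e^{-λ n_{T,U}(E)}` over all countable families
`𝓔` of subsets of `X` with `∪𝓔 ⊇ K` and `E ⪰ U_0^{k-1}` for every `E ∈ 𝓔`. -/
def mTU (T : X → X) (U : Finset (Set X)) (K : Set X) (lam : ℝ) (k : ℕ) : ℝ≥0∞ :=
  ⨅ (ℰ : Set (Set X)) (_ : ℰ.Countable ∧ K ⊆ ⋃₀ ℰ ∧ ∀ E ∈ ℰ, Refines E (dynCov T U k)),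
    ∑' E : ℰ, expWeight lam (nTU T U (E : Set X))

/-- `m_{T,U}(K,λ) = lim_{k→∞} m_{T,U}(K,λ,k)`; since `m_{T,U}(K,λ,k)` is nondecreasing in `k`,
the limit is the supremum. -/
def mTUlim (T : X → X) (U : Finset (Set X)) (K : Set X) (lam : ℝ) : ℝ≥0∞ :=
  ⨆ k : ℕ, mTU T U K lam k

/-- `h^B_U(T,K) = inf {λ : m_{T,U}(K,λ) = 0}`. -/
def hBU (T : X → X) (U : Finset (Set X)) (K : Set X) : EReal :=
  ⨅ (lam : ℝ) (_ : mTUlim T U K lam = 0), (lam : EReal)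

/-- The dimensional entropy `h^B(T,K) = sup_U h^B_U(T,K)`, supremum over finite open covers. -/
def hB [TopologicalSpace X] (T : X → X) (K : Set X) : EReal :=
  ⨆ (U : Finset (Set X)) (_ : (∀ A ∈ U, IsOpen A) ∧ ⋃₀ (↑U : Set (Set X)) = univ),
    hBU T U K

/-- `N(U,K)`: the minimal cardinality of a subfamily of `U` covering `K` (`0` for `K = ∅`,
`∞` if no subfamily covers `K`). -/
def covCard (U : Finset (Set X)) (K : Set X) : ℝ≥0∞ :=
  ⨅ (V : Finset (Set X)) (_ : V ⊆ U ∧ K ⊆ ⋃₀ (↑V : Set (Set X))), (V.card : ℝ≥0∞)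

/-- `h_U(T,K) = limsup_{n→∞} (1/n) log N(U_0^{n-1},K)`. -/
def hCov (T : X → X) (U : Finset (Set X)) (K : Set X) : EReal :=
  Filter.atTop.limsup fun n : ℕ => ENNReal.log (covCard (dynCov T U n) K) / (n : EReal)

/-- Topological entropy of a subset via open covers: `h(T,K) = sup_U h_U(T,K)`. -/
def hCovSup [TopologicalSpace X] (T : X → X) (K : Set X) : EReal :=
  ⨆ (U : Finset (Set X)) (_ : (∀ A ∈ U, IsOpen A) ∧ ⋃₀ (↑U : Set (Set X)) = univ),
    hCov T U K

/-- The atom of the (finite) partition `P` containing `x`. -/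
def atomAt (P : Finset (Set X)) (x : X) : Set X := ⋃₀ {A | A ∈ P ∧ x ∈ A}

/-- `P` is a finite Borel partition. -/
def IsFinPartition [MeasurableSpace X] (P : Finset (Set X)) : Prop :=
  (∀ A ∈ P, MeasurableSet A) ∧ ⋃₀ (↑P : Set (Set X)) = univ ∧
    (↑P : Set (Set X)).Pairwise fun A B => Disjoint A B

/-- The Shannon entropy `H_μ(P) = ∑_{A ∈ P} -μ(A) log μ(A)` of a finite partition. -/
def partEnt [MeasurableSpace X] (μ : Measure X) (P : Finset (Set X)) : ℝ :=
  ∑ A ∈ P, -((μ A).toReal * Real.log (μ A).toReal)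

/-- The measure-theoretic (Kolmogorov–Sinai) entropy `h_μ(T)`: the supremum over finite Borel
partitions `P` of `lim_n (1/n) H_μ(P_0^{n-1})`; by subadditivity this limit is the infimum. -/
def ksEntropy [MeasurableSpace X] (T : X → X) (μ : Measure X) : EReal :=
  ⨆ (P : Finset (Set X)) (_ : IsFinPartition P),
    ⨅ n : ℕ, ((partEnt μ (dynCov T P (n + 1)) / (n + 1) : ℝ) : EReal)

/-- `π` is a principal factor map from `(X,T)` to `(Y,S)` : `h_μ(T) = h_{πμ}(S)` for every
`T`-invariant Borel probability measure `μ`. -/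
def IsPrincipal [MeasurableSpace X] [MeasurableSpace Y] (T : X → X) (S : Y → Y)
    (π : X → Y) : Prop :=
  ∀ μ : Measure X, IsProbabilityMeasure μ → Measure.map T μ = μ →
    ksEntropy T μ = ksEntropy S (Measure.map π μ)

/-- The relative topological entropy `h_top(T,X|π) = sup_{y ∈ Y} h(T, π^{-1}(y))`. -/
def relEnt [PseudoMetricSpace X] (T : X → X) (π : X → Y) : EReal :=
  ⨆ y : Y, subEnt T (π ⁻¹' {y})

/-- The canonical conversion `EReal → ℝ≥0∞` (`⊥` and negative reals go to `0`). -/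
def erealToENNReal (x : EReal) : ℝ≥0∞ := if x = ⊤ then ⊤ else ENNReal.ofReal x.toReal

/-!
A principal factor map `π` onto a system of finite entropy has fibres of zero entropy. Indeed, if
some fibre had entropy greater than `b > 0`, the orbit averages of the uniform measures on its
separated sets would accumulate at an invariant measure `μ` with `h_μ(T') ≥ h_{πμ}(T) + b`, and
`h_{πμ}(T) < ∞`. By Bowen's covering argument, zero fibre entropy makes separated sets grow
subexponentially, uniformly over small Bowen balls of the base, so `h(T', K) = h(T, π K)` for every
`K`. Images and preimages then transfer (hereditary) lowerability, and comparing the sets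
`Φ_ε` upstairs and downstairs transfers asymptotic `h`-expansiveness.

For HUL, images of sets with at most one limit point again have at most one. Conversely, HUL forces
asymptotic `h`-expansiveness, which lifts to the extension; there, the entropy of every compact set
is carried by a subset with at most one limit point.
-/

/-! ### Separated sets and their exponential growth -/

section Growth

variable [PseudoMetricSpace X] {T : X → X} {n m : ℕ} {ε ε' : ℝ} {K K' : Set X} {b b' : ℝ}

/-- The closed Bowen ball `{y | d_n(x, y) ≤ ε}`. -/
def bowenBall (T : X → X) (n : ℕ) (ε : ℝ) (x : X) : Set X :=
  {y | ∀ i < n, dist (T^[i] x) (T^[i] y) ≤ ε}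

theorem mem_bowenBall_self (hε : 0 ≤ ε) (x : X) : x ∈ bowenBall T n ε x := fun i _ => by
  simpa using hε

theorem mem_bowenBall_comm {x y : X} : y ∈ bowenBall T n ε x ↔ x ∈ bowenBall T n ε y := by
  simp only [bowenBall, mem_ofPred_eq, dist_comm]

theorem mem_bowenBall_trans {x y z : X} (hy : y ∈ bowenBall T n ε x)
    (hz : z ∈ bowenBall T n ε' x) : z ∈ bowenBall T n (ε + ε') y := fun i hi =>
  (dist_triangle_left _ _ _).trans (add_le_add (hy i hi) (hz i hi))

theorem Phi_subset_bowenBall (x : X) : Phi T ε x ⊆ bowenBall T n ε x := fun _ hy i _ => hy i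

theorem bowenBall_mem_nhds (hT : Continuous T) (n : ℕ) (hε : 0 < ε) (x : X) :
    bowenBall T n ε x ∈ 𝓝 x := by
  refine (Filter.eventually_all_finite (finite_lt_nat n)).2 fun i _ => ?_
  have h : Tendsto (fun y => dist (T^[i] x) (T^[i] y)) (𝓝 x) (𝓝 0) := by
    simpa using (continuous_const.dist (hT.iterate i)).tendsto (f := fun y => dist (T^[i] x) _) x
  exact (h.eventually (gt_mem_nhds hε)).mono fun y hy => hy.le

theorem IsSep.mono {E F : Set X} (h : IsSep T n ε E) (hn : n ≤ m) (hε : ε' ≤ ε) (hF : F ⊆ E) :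
    IsSep T m ε' F :=
  (Set.Pairwise.mono hF h).mono' fun _ _ ⟨i, hi, hd⟩ => ⟨i, hi.trans_le hn, hε.trans_lt hd⟩

theorem IsSep.eq_of_mem_bowenBall {E : Set X} (h : IsSep T n ε E) {x y : X} (hx : x ∈ E)
    (hy : y ∈ E) (hxy : y ∈ bowenBall T n ε x) : x = y := by
  by_contra hne
  obtain ⟨i, hi, hd⟩ := h hx hy hne
  exact hd.not_ge (hxy i hi)

theorem exists_card_le_of_isSep [CompactSpace X] (hT : Continuous T) (n : ℕ) (hε : 0 < ε) :
    ∃ N : ℕ, ∀ E : Finset X, IsSep T n ε (E : Set X) → E.card ≤ N := by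
  obtain ⟨t, -, ht⟩ := isCompact_univ.elim_nhds_subcover _
    fun x _ => bowenBall_mem_nhds hT n (half_pos hε) x
  have hcenter : ∀ x, ∃ c ∈ t, x ∈ bowenBall T n (ε / 2) c := fun x => by
    simpa using ht (mem_univ x)
  choose c hct hc using hcenter
  refine ⟨t.card, fun E hE => Finset.card_le_card_of_injOn c (fun x _ => hct x) ?_⟩
  intro x hx y hy hxy
  have hxy' := mem_bowenBall_trans (hc x) (hxy ▸ hc y)
  rw [add_halves] at hxy'
  exact hE.eq_of_mem_bowenBall hx hy hxy'

theorem exists_subset_biUnion_bowenBall (hε : 0 ≤ ε) {N : ℝ}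
    (hN : ∀ E : Finset X, (E : Set X) ⊆ K → IsSep T n ε (E : Set X) → (E.card : ℝ) ≤ N) :
    ∃ E : Finset X, (E : Set X) ⊆ K ∧ (E.card : ℝ) ≤ N ∧ K ⊆ ⋃ e ∈ E, bowenBall T n ε e := by
  classical
  let P : ℕ → Prop := fun k =>
    ∃ E : Finset X, (E : Set X) ⊆ K ∧ IsSep T n ε (E : Set X) ∧ E.card = k
  have hP : ∀ k, P k → k ≤ ⌊N⌋₊ := by
    rintro k ⟨E, hEK, hE, rfl⟩
    exact Nat.le_floor (hN E hEK hE)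
  obtain ⟨E, hEK, hE, hcard⟩ :=
    Nat.findGreatest_spec (P := P) (Nat.zero_le ⌊N⌋₊) ⟨∅, by simp, by simp [IsSep], rfl⟩
  refine ⟨E, hEK, hN E hEK hE, fun x hx => ?_⟩
  by_contra hcov
  simp only [mem_iUnion, not_exists] at hcov
  have hxE : x ∉ E := fun h => hcov x h (mem_bowenBall_self hε x)
  have hinsert : IsSep T n ε (insert x E : Set X) := by
    refine (Set.pairwise_insert_of_notMem hxE).2 ⟨hE, fun e he => ?_⟩
    obtain ⟨i, hi, hd⟩ : ∃ i < n, ε < dist (T^[i] e) (T^[i] x) := by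
      simpa only [bowenBall, mem_ofPred_eq, not_forall, not_le, exists_prop] using hcov e he
    exact ⟨⟨i, hi, by rwa [dist_comm]⟩, ⟨i, hi, hd⟩⟩
  have hlarger : P (E.card + 1) :=
    ⟨insert x E, by simpa using Set.insert_subset hx hEK, by simpa using hinsert,
      Finset.card_insert_of_notMem hxE⟩
  have := Nat.le_findGreatest (hP _ hlarger) hlarger
  omega

theorem sepMaxCard_le_iff {N : ℝ≥0∞} : sepMaxCard T n ε K ≤ N ↔
    ∀ E : Finset X, (E : Set X) ⊆ K → IsSep T n ε (E : Set X) → (E.card : ℝ≥0∞) ≤ N := by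
  simp only [sepMaxCard, iSup_le_iff, and_imp]

theorem IsSep.card_le_sepMaxCard {E : Finset X} (h : IsSep T n ε (E : Set X))
    (hE : (E : Set X) ⊆ K) : (E.card : ℝ≥0∞) ≤ sepMaxCard T n ε K :=
  sepMaxCard_le_iff.1 le_rfl E hE h

theorem sepMaxCard_mono (h : K ⊆ K') : sepMaxCard T n ε K ≤ sepMaxCard T n ε K' :=
  sepMaxCard_le_iff.2 fun _ hE hsep => hsep.card_le_sepMaxCard (hE.trans h)

theorem sepMaxCard_union_le :
    sepMaxCard T n ε (K ∪ K') ≤ sepMaxCard T n ε K + sepMaxCard T n ε K' := by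
  classical
  refine sepMaxCard_le_iff.2 fun E hE hsep => ?_
  rw [← Finset.card_filter_add_card_filter_not (s := E) (· ∈ K), Nat.cast_add]
  have hsub : ∀ F ⊆ E, IsSep T n ε (F : Set X) := fun F hF =>
    hsep.mono le_rfl le_rfl (Finset.coe_subset.2 hF)
  refine add_le_add
    ((hsub _ (Finset.filter_subset _ _)).card_le_sepMaxCard fun x hx =>
      (Finset.mem_filter.1 hx).2)
    ((hsub _ (Finset.filter_subset _ _)).card_le_sepMaxCard fun x hx => ?_)
  obtain ⟨hxE, hxK⟩ := Finset.mem_filter.1 hx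
  exact (hE hxE).resolve_left hxK

theorem sepEnt_mono (h : K ⊆ K') : sepEnt T ε K ≤ sepEnt T ε K' :=
  ExpGrowth.expGrowthSup_monotone fun _ => sepMaxCard_mono h

theorem sepEnt_union_le : sepEnt T ε (K ∪ K') ≤ max (sepEnt T ε K) (sepEnt T ε K') :=
  (ExpGrowth.expGrowthSup_monotone fun _ => sepMaxCard_union_le).trans_eq
    ExpGrowth.expGrowthSup_add

theorem sepEnt_le_subEnt (T : X → X) (hε : 0 < ε) (K : Set X) : sepEnt T ε K ≤ subEnt T K :=
  le_iSup₂ (f := fun (ε : ℝ) (_ : 0 < ε) => sepEnt T ε K) ε hε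

theorem subEnt_mono (h : K ⊆ K') : subEnt T K ≤ subEnt T K' :=
  iSup₂_mono fun _ _ => sepEnt_mono h

theorem subEnt_union_le (T : X → X) (K K' : Set X) :
    subEnt T (K ∪ K') ≤ max (subEnt T K) (subEnt T K') :=
  iSup₂_le fun _ hε => sepEnt_union_le.trans
    (max_le_max (sepEnt_le_subEnt T hε K) (sepEnt_le_subEnt T hε K'))

theorem subEnt_empty (T : X → X) : subEnt T (∅ : Set X) = ⊥ := by
  have hcard : ∀ n ε, sepMaxCard T n ε ∅ = 0 := fun n ε => by
    refine le_antisymm (sepMaxCard_le_iff.2 fun E hE _ => ?_) zero_le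
    simp [Finset.coe_eq_empty.1 (Set.subset_empty_iff.1 hE)]
  refine le_bot_iff.1 (iSup₂_le fun ε _ => ?_)
  refine (ExpGrowth.expGrowthSup_monotone fun n => (hcard n ε).le).trans_eq ?_
  exact ExpGrowth.expGrowthSup_zero

theorem subEnt_le_zero_of_finite (T : X → X) (hK : K.Finite) : subEnt T K ≤ 0 := by
  refine iSup₂_le fun ε _ => ?_
  have hcard : ∀ n, sepMaxCard T n ε K ≤ ((hK.toFinset.card + 1 : ℕ) : ℝ≥0∞) := fun n =>
    sepMaxCard_le_iff.2 fun E hE _ => Nat.cast_le.2 <|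
      (Finset.card_le_card fun x hx => by simpa using hE hx).trans (Nat.le_succ _)
  exact (ExpGrowth.expGrowthSup_monotone hcard).trans_eq
    (ExpGrowth.expGrowthSup_const (by simp) (ENNReal.natCast_ne_top _))

theorem sepEnt_nonneg (T : X → X) (ε : ℝ) (hK : K.Nonempty) : 0 ≤ sepEnt T ε K := by
  obtain ⟨x, hx⟩ := hK
  have hcard : ∀ n, 1 ≤ sepMaxCard T n ε K := fun n => by
    simpa using IsSep.card_le_sepMaxCard (T := T) (n := n) (ε := ε) (E := {x}) (by simp [IsSep])
      (by simpa using hx)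
  exact (ExpGrowth.expGrowthSup_const one_ne_zero ENNReal.one_ne_top).ge.trans
    (ExpGrowth.expGrowthSup_monotone hcard)

theorem subEnt_nonneg (T : X → X) (hK : K.Nonempty) : 0 ≤ subEnt T K :=
  (sepEnt_nonneg T 1 hK).trans (sepEnt_le_subEnt T one_pos K)

theorem subEnt_singleton (T : X → X) (x : X) : subEnt T ({x} : Set X) = 0 :=
  (subEnt_le_zero_of_finite T (finite_singleton x)).antisymm (subEnt_nonneg T ⟨x, rfl⟩)

/-- The non-asymptotic form of `sepEnt T ε K ≤ b`: the `(n, ε)`-separated subsets of `K` have at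
most `C e^{bn}` points, with `C` independent of `n`. -/
def SepGrowthLE (T : X → X) (ε : ℝ) (K : Set X) (b : ℝ) : Prop :=
  ∃ C : ℝ, ∀ (n : ℕ) (E : Finset X), (E : Set X) ⊆ K → IsSep T n ε (E : Set X) →
    (E.card : ℝ) ≤ C * Real.exp (b * n)

theorem SepGrowthLE.sepEnt_le (h : SepGrowthLE T ε K b) : sepEnt T ε K ≤ b := by
  obtain ⟨C, hC⟩ := h
  refine (ExpGrowth.expGrowthSup_le_of_eventually_le (b := ENNReal.ofReal C)
    (v := fun n : ℕ => EReal.exp (b * n)) ENNReal.ofReal_ne_top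
    (Eventually.of_forall fun n => ?_)).trans_eq ExpGrowth.expGrowthSup_exp
  refine sepMaxCard_le_iff.2 fun E hE hsep => ?_
  have hcast : (b : EReal) * (n : EReal) = ((b * n : ℝ) : EReal) := by push_cast; rfl
  rw [← ENNReal.ofReal_natCast, hcast, EReal.exp_coe, ← ENNReal.ofReal_mul' (Real.exp_pos _).le]
  exact ENNReal.ofReal_le_ofReal (hC n E hE hsep)

theorem SepGrowthLE.mono (h : SepGrowthLE T ε K b) (hε : ε ≤ ε') (hK : K' ⊆ K) (hb : b ≤ b') :
    SepGrowthLE T ε' K' b' := by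
  obtain ⟨C, hC⟩ := h
  refine ⟨max C 0, fun n E hE hsep => ?_⟩
  refine (hC n E (hE.trans hK) (hsep.mono le_rfl hε subset_rfl)).trans ?_
  gcongr
  exact le_max_left C 0

theorem SepGrowthLE.of_sepEnt_lt [CompactSpace X] (hT : Continuous T) (hε : 0 < ε)
    (h : sepEnt T ε K < b) : SepGrowthLE T ε K b := by
  obtain ⟨n₀, hlarge⟩ := eventually_atTop.1 (ExpGrowth.eventually_le_exp h)
  obtain ⟨N, hN⟩ := exists_card_le_of_isSep hT n₀ hε
  refine ⟨max 1 (N * Real.exp (|b| * n₀)), fun n E hE hsep => ?_⟩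
  rcases le_or_gt n₀ n with hn | hn
  · have hcast : (b : EReal) * (n : EReal) = ((b * n : ℝ) : EReal) := by push_cast; rfl
    have hcard := (hsep.card_le_sepMaxCard hE).trans (hlarge n hn)
    rw [hcast, EReal.exp_coe, ← ENNReal.ofReal_natCast,
      ENNReal.ofReal_le_ofReal_iff (Real.exp_pos _).le] at hcard
    exact hcard.trans (le_mul_of_one_le_left (Real.exp_pos _).le (le_max_left _ _))
  · have hrate : 0 ≤ |b| * n₀ + b * n := by
      have h₁ : |b| * n ≤ |b| * n₀ := by gcongr
      have h₂ : -|b| * n ≤ b * n := by gcongr; exact neg_abs_le b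
      linarith
    calc (E.card : ℝ) ≤ N := by exact_mod_cast hN E (hsep.mono hn.le le_rfl subset_rfl)
      _ ≤ N * Real.exp (|b| * n₀ + b * n) :=
        le_mul_of_one_le_right N.cast_nonneg (Real.one_le_exp hrate)
      _ = N * Real.exp (|b| * n₀) * Real.exp (b * n) := by rw [Real.exp_add, mul_assoc]
      _ ≤ _ := by gcongr; exact le_max_right _ _

theorem subEnt_le_iff [CompactSpace X] (hT : Continuous T) {a : ℝ} :
    subEnt T K ≤ (a : EReal) ↔ ∀ ε : ℝ, 0 < ε → ∀ b : ℝ, a < b → SepGrowthLE T ε K b := by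
  refine ⟨fun h ε hε b hb => .of_sepEnt_lt hT hε ?_, fun h => iSup₂_le fun ε hε => ?_⟩
  · exact ((sepEnt_le_subEnt T hε K).trans h).trans_lt (EReal.coe_lt_coe hb)
  · rw [← EReal.le_of_forall_lt_iff_le]
    exact fun b hb => (h ε hε b (by exact_mod_cast hb)).sepEnt_le

end Growth

/-! ### Uniform growth along fibers -/

theorem card_le_card_mul_of_subset_biUnion {α β : Type*} {A : Finset α} {E : Finset β}
    {B : β → Set α} {N : ℝ} (hcov : (A : Set α) ⊆ ⋃ e ∈ E, B e)
    (hN : ∀ e ∈ E, ∀ A' ⊆ A, (A' : Set α) ⊆ B e → (A'.card : ℝ) ≤ N) :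
    (A.card : ℝ) ≤ E.card * N := by
  classical
  have hsub : A ⊆ E.biUnion fun e => A.filter (· ∈ B e) := fun x hx => by
    obtain ⟨e, he, hxe⟩ := mem_iUnion₂.1 (hcov hx)
    exact Finset.mem_biUnion.2 ⟨e, he, Finset.mem_filter.2 ⟨hx, hxe⟩⟩
  calc (A.card : ℝ) ≤ ∑ e ∈ E, ((A.filter (· ∈ B e)).card : ℝ) := by
        exact_mod_cast (Finset.card_le_card hsub).trans Finset.card_biUnion_le
    _ ≤ ∑ _e ∈ E, N := Finset.sum_le_sum fun e he =>
        hN e he _ (Finset.filter_subset _ _) fun x hx => (Finset.mem_filter.1 hx).2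
    _ = E.card * N := by rw [Finset.sum_const, nsmul_eq_mul]

theorem exists_eventually_fiber_subset [TopologicalSpace Y] [TopologicalSpace X] [CompactSpace X]
    {F : ℕ → Set (Y × X)} (hF : ∀ k, IsClosed (F k)) (hmono : Antitone F) {y : Y} {O : Set X}
    (hO : IsOpen O) (hy : {x | ∀ k, (y, x) ∈ F k} ⊆ O) :
    ∃ k, ∀ᶠ y' in 𝓝 y, {x | (y', x) ∈ F k} ⊆ O := by
  have hfib : ∀ k, IsClosed ({x | (y, x) ∈ F k} ∩ Oᶜ) := fun k =>
    ((hF k).preimage (Continuous.prodMk_right y)).inter hO.isClosed_compl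
  obtain ⟨k, hk⟩ : ∃ k, {x | (y, x) ∈ F k} ∩ Oᶜ = ∅ := by
    by_contra! hne
    have hanti : ∀ k, {x | (y, x) ∈ F (k + 1)} ⊆ {x | (y, x) ∈ F k} := fun k x hx =>
      hmono k.le_succ hx
    obtain ⟨x, hx⟩ := IsCompact.nonempty_iInter_of_sequence_nonempty_isCompact_isClosed _
      (fun k => inter_subset_inter_left _ (hanti k)) hne (hfib 0).isCompact hfib
    rw [mem_iInter] at hx
    exact (hx 0).2 (hy fun k => (hx k).1)
  have hclosed : IsClosed (Prod.fst '' (F k ∩ Prod.snd ⁻¹' Oᶜ)) :=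
    isClosedMap_fst_of_compactSpace _
      ((hF k).inter (hO.isClosed_compl.preimage continuous_snd))
  refine ⟨k, (hclosed.isOpen_compl.eventually_mem ?_).mono fun y' hy' x hx => ?_⟩
  · rintro ⟨⟨_, x⟩, ⟨hxF, hxO⟩, rfl⟩
    exact notMem_empty x (hk.subset ⟨hxF, hxO⟩)
  · by_contra hxO
    exact hy' ⟨(y', x), ⟨hx, hxO⟩, rfl⟩

theorem exists_mul_exp_le {κ b b' : ℝ} (C : ℝ) (hκ : 0 < κ) (hb : b' < b) :
    ∃ m : ℕ, 1 ≤ m ∧ C * Real.exp (b' * m) ≤ κ * Real.exp (b * m) := by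
  have hlim : Tendsto (fun n : ℕ => Real.exp ((b - b') * n)) atTop atTop :=
    Real.tendsto_exp_atTop.comp (tendsto_natCast_atTop_atTop.const_mul_atTop (sub_pos.2 hb))
  obtain ⟨m, hm, hCm⟩ :=
    ((eventually_ge_atTop 1).and (hlim.eventually_ge_atTop (C / κ))).exists
  refine ⟨m, hm, ?_⟩
  calc C * Real.exp (b' * m) ≤ κ * Real.exp ((b - b') * m) * Real.exp (b' * m) := by
        gcongr
        exact (div_le_iff₀' hκ).1 hCm
    _ = κ * Real.exp (b * m) := by rw [mul_assoc, ← Real.exp_add]; ring_nf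

section Bowen

variable [PseudoMetricSpace X] {T : X → X}

theorem exists_uniform_span [CompactSpace X] [TopologicalSpace Y] [CompactSpace Y]
    (hT : Continuous T)
    {F : ℕ → Set (Y × X)} (hF : ∀ k, IsClosed (F k)) (hmono : Antitone F) {b b' δ κ : ℝ}
    (hδ : 0 < δ) (hκ : 0 < κ) (hb : b' < b)
    (hgrowth : ∀ y, SepGrowthLE T δ {x | ∀ k, (y, x) ∈ F k} b') :
    ∃ k M : ℕ, ∀ y, ∃ (m : ℕ) (E : Finset X), 1 ≤ m ∧ m ≤ M ∧
      (E.card : ℝ) ≤ κ * Real.exp (b * m) ∧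
      {x | (y, x) ∈ F k} ⊆ ⋃ e ∈ E, bowenBall T m (δ + δ) e := by
  have hlocal : ∀ y, ∃ (k m : ℕ) (E : Finset X), 1 ≤ m ∧ (E.card : ℝ) ≤ κ * Real.exp (b * m) ∧
      ∀ᶠ y' in 𝓝 y, {x | (y', x) ∈ F k} ⊆ ⋃ e ∈ E, bowenBall T m (δ + δ) e := fun y => by
    obtain ⟨C, hC⟩ := hgrowth y
    obtain ⟨m, hm, hCm⟩ := exists_mul_exp_le C hκ hb
    obtain ⟨E, -, hEcard, hE⟩ := exists_subset_biUnion_bowenBall hδ.le (hC m)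
    obtain ⟨k, hk⟩ := exists_eventually_fiber_subset hF hmono (y := y)
      (O := interior (⋃ e ∈ E, bowenBall T m (δ + δ) e)) isOpen_interior fun x hx => by
        obtain ⟨e, he, hxe⟩ := mem_iUnion₂.1 (hE hx)
        refine mem_interior_iff_mem_nhds.2 (mem_of_superset (bowenBall_mem_nhds hT m hδ x) ?_)
        exact fun z hz => mem_iUnion₂.2 ⟨e, he, mem_bowenBall_trans (mem_bowenBall_comm.1 hxe) hz⟩
    exact ⟨k, m, E, hm, hEcard.trans hCm, hk.mono fun y' hy' => hy'.trans interior_subset⟩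
  choose k m E hm hcard hcov using hlocal
  obtain ⟨t, -, ht⟩ := isCompact_univ.elim_nhds_subcover _ fun y _ => hcov y
  refine ⟨t.sup k, t.sup m, fun y => ?_⟩
  obtain ⟨c, hct, hyc⟩ := mem_iUnion₂.1 (ht (mem_univ y))
  exact ⟨m c, E c, hm c, Finset.le_sup hct, hcard c,
    fun x hx => hyc (hmono (Finset.le_sup hct) hx)⟩

/-- An `(n, ε)`-separated set `A` of points whose orbits, up to the last `k` of the times `t < n`,
either visit `V` or are `R`-related to the orbit of `y`, and such that orbits visiting `V`
simultaneously are then `ε`-close. The set `V` is where separation is suspended in the counting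
argument of Bowen. -/
structure IsShadowingSep (T : X → X) (S : Y → Y) (R : Set (Y × X)) (V : Set X) (k : ℕ) (ε : ℝ)
    (n : ℕ) (y : Y) (A : Finset X) : Prop where
  isSep : IsSep T n ε (A : Set X)
  mem_or_rel : ∀ x ∈ A, ∀ t, t + k < n → T^[t] x ∈ V ∨ (S^[t] y, T^[t] x) ∈ R
  dist_le : ∀ x ∈ A, ∀ x' ∈ A, ∀ t < n, T^[t] x ∈ V → T^[t] x' ∈ V →
    dist (T^[t] x) (T^[t] x') ≤ ε

namespace IsShadowingSep

variable {S : Y → Y} {R : Set (Y × X)} {V : Set X} {k n : ℕ} {ε : ℝ} {y : Y} {A : Finset X}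

theorem subset (h : IsShadowingSep T S R V k ε n y A) {B : Finset X} (hB : B ⊆ A) :
    IsShadowingSep T S R V k ε n y B where
  isSep := h.isSep.mono le_rfl le_rfl hB
  mem_or_rel x hx := h.mem_or_rel x (hB hx)
  dist_le x hx x' hx' := h.dist_le x (hB hx) x' (hB hx')

theorem exists_iterate (h : IsShadowingSep T S R V k ε n y A) (hε : 0 ≤ ε) (w : ℕ)
    (hclose : ∀ x ∈ A, ∀ x' ∈ A, x' ∈ bowenBall T w ε x) :
    ∃ B : Finset X, B.card = A.card ∧ IsShadowingSep T S R V k ε (n - w) (S^[w] y) B := by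
  classical
  have hsep : ∀ x ∈ A, ∀ x' ∈ A, x ≠ x' →
      ∃ i < n - w, ε < dist (T^[i] (T^[w] x)) (T^[i] (T^[w] x')) := fun x hx x' hx' hne => by
    obtain ⟨i, hi, hd⟩ := h.isSep hx hx' hne
    have hwi : w ≤ i := not_lt.1 fun hiw => hd.not_ge (hclose x hx x' hx' i hiw)
    refine ⟨i - w, by omega, ?_⟩
    rwa [← Function.iterate_add_apply, ← Function.iterate_add_apply, Nat.sub_add_cancel hwi]
  refine ⟨A.image T^[w], Finset.card_image_of_injOn fun x hx x' hx' hxx' => ?_, ?_, ?_, ?_⟩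
  · by_contra hne
    obtain ⟨i, -, hd⟩ := hsep x hx x' hx' hne
    rw [hxx', dist_self] at hd
    exact hε.not_gt hd
  · simp only [IsSep, Set.Pairwise, Finset.coe_image, forall_mem_image]
    exact fun x hx x' hx' hne => hsep x hx x' hx' (ne_of_apply_ne _ hne)
  · simp only [Finset.forall_mem_image, ← Function.iterate_add_apply]
    exact fun x hx t ht => h.mem_or_rel x hx (t + w) (by omega)
  · simp only [Finset.forall_mem_image, ← Function.iterate_add_apply]
    exact fun x hx x' hx' t ht => h.dist_le x hx x' hx' (t + w) (by omega)

/- Induction on `n`: the points of `A` in `V` are indistinguishable at time `0`, and the others fall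
into at most `(1 - e^{-b}) e^{bm}` classes of points indistinguishable up to time `m`. -/
theorem exists_card_le_mul_exp [CompactSpace X] (hT : Continuous T) {b δ : ℝ} (hδ : 0 < δ)
    (hb : 0 < b) {M : ℕ}
    (hspan : ∀ y, ∃ (m : ℕ) (E : Finset X), 1 ≤ m ∧ m ≤ M ∧
      (E.card : ℝ) ≤ (1 - Real.exp (-b)) * Real.exp (b * m) ∧
      {x | (y, x) ∈ R} ⊆ ⋃ e ∈ E, bowenBall T m (δ + δ) e) :
    ∃ C : ℝ, ∀ n y A, IsShadowingSep T S R V k (4 * δ) n y A →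
      (A.card : ℝ) ≤ C * Real.exp (b * n) := by
  classical
  obtain ⟨N, hN⟩ := exists_card_le_of_isSep hT (M + k) (by positivity : 0 < 4 * δ)
  refine ⟨N, fun n => ?_⟩
  induction n using Nat.strong_induction_on with | _ n ih
  intro y A hA
  rcases le_or_gt n (M + k) with hn | hn
  · calc (A.card : ℝ) ≤ N := by exact_mod_cast hN A (hA.isSep.mono hn le_rfl subset_rfl)
      _ ≤ N * Real.exp (b * n) :=
        le_mul_of_one_le_right N.cast_nonneg (Real.one_le_exp (by positivity))
  obtain ⟨m, E, hm, hmM, hEcard, hcov⟩ := hspan y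
  have hshift : ∀ B ⊆ A, ∀ w, 1 ≤ w → w ≤ n →
      (∀ x ∈ B, ∀ x' ∈ B, x' ∈ bowenBall T w (4 * δ) x) →
      (B.card : ℝ) ≤ N * Real.exp (b * (n - w)) := fun B hB w hw hwn hclose => by
    obtain ⟨B', hcard, hB'⟩ := (hA.subset hB).exists_iterate (by positivity) w hclose
    simpa [hcard, Nat.cast_sub hwn] using ih (n - w) (by omega) _ B' hB'
  have hin : ((A.filter (· ∈ V)).card : ℝ) ≤ N * Real.exp (b * (n - (1 : ℕ))) := by
    refine hshift _ (Finset.filter_subset _ _) 1 le_rfl (by omega) fun x hx x' hx' i hi => ?_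
    obtain rfl := Nat.lt_one_iff.1 hi
    rw [Finset.mem_filter] at hx hx'
    exact hA.dist_le x hx.1 x' hx'.1 0 (by omega) hx.2 hx'.2
  have hout : ((A.filter (· ∉ V)).card : ℝ) ≤ E.card * (N * Real.exp (b * (n - m))) := by
    refine card_le_card_mul_of_subset_biUnion (B := bowenBall T m (δ + δ)) (fun x hx => ?_)
      fun e _ B hB hBe => ?_
    · obtain ⟨hxA, hxV⟩ := Finset.mem_filter.1 hx
      exact hcov ((hA.mem_or_rel x hxA 0 (by omega)).resolve_left hxV)
    · refine hshift B (hB.trans (Finset.filter_subset _ _)) m hm (by omega) fun x hx x' hx' => ?_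
      have := mem_bowenBall_trans (hBe hx) (hBe hx')
      rwa [show δ + δ + (δ + δ) = 4 * δ by ring] at this
  rw [← Finset.card_filter_add_card_filter_not (s := A) (· ∈ V), Nat.cast_add]
  calc _ ≤ N * Real.exp (b * (n - (1 : ℕ))) +
        (1 - Real.exp (-b)) * Real.exp (b * m) * (N * Real.exp (b * (n - m))) :=
        add_le_add hin (hout.trans (by gcongr))
    _ = N * (Real.exp (b * n) * Real.exp (-b)) +
        (1 - Real.exp (-b)) * N * (Real.exp (b * m) * Real.exp (b * (n - m))) := by
        rw [← Real.exp_add, Nat.cast_one, mul_sub, mul_one, ← sub_eq_add_neg]; ring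
    _ = N * Real.exp (b * n) := by
        rw [← Real.exp_add (b * m), ← mul_add, add_sub_cancel]; ring

theorem exists_card_le_mul_exp_of_sepGrowthLE [CompactSpace X] [TopologicalSpace Y]
    [CompactSpace Y] (hT : Continuous T) {F : ℕ → Set (Y × X)} (hF : ∀ k, IsClosed (F k))
    (hmono : Antitone F)
    {b b' δ : ℝ} (hδ : 0 < δ) (hb : 0 < b) (hb' : b' < b)
    (hgrowth : ∀ y, SepGrowthLE T δ {x | ∀ k, (y, x) ∈ F k} b') :
    ∃ (C : ℝ) (k : ℕ), ∀ n y A, IsShadowingSep T S (F k) V k (4 * δ) n y A →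
      (A.card : ℝ) ≤ C * Real.exp (b * n) := by
  obtain ⟨k, M, hspan⟩ := exists_uniform_span hT hF hmono hδ
    (sub_pos.2 (Real.exp_lt_one_iff.2 (neg_lt_zero.2 hb))) hb' hgrowth
  obtain ⟨C, hC⟩ := exists_card_le_mul_exp hT hδ hb hspan
  exact ⟨C, k, hC⟩

end IsShadowingSep

end Bowen

/-! ### Entropy of subsets and factor maps -/

theorem exists_card_le_mul_exp_of_sepGrowthLE_diff [PseudoMetricSpace X] [CompactSpace X]
    {T : X → X} (hT : Continuous T) {V : Set X} (hV : IsOpen V) {ε b b' δ : ℝ} (hδ : 0 < δ)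
    (hb : 0 < b) (hb' : b' < b) (hgrowth : ∀ z, SepGrowthLE T δ (Phi T ε z \ V) b') :
    ∃ C : ℝ, ∀ (n : ℕ) (z : X) (A : Finset X), IsSep T n (4 * δ) (A : Set X) →
      (A : Set X) ⊆ bowenBall T n ε z →
      (∀ x ∈ A, ∀ x' ∈ A, ∀ t < n, T^[t] x ∈ V → T^[t] x' ∈ V →
        dist (T^[t] x) (T^[t] x') ≤ 4 * δ) →
      (A.card : ℝ) ≤ C * Real.exp (b * n) := by
  let F : ℕ → Set (X × X) := fun k =>
    {p | p.2 ∈ Vᶜ ∧ ∀ i ≤ k, dist (T^[i] p.1) (T^[i] p.2) ≤ ε}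
  have hF : ∀ k, IsClosed (F k) := fun k => by
    have hball : IsClosed (⋂ i ≤ k, {p : X × X | dist (T^[i] p.1) (T^[i] p.2) ≤ ε}) :=
      isClosed_biInter fun i _ => isClosed_le (((hT.iterate i).comp continuous_fst).dist
        ((hT.iterate i).comp continuous_snd)) continuous_const
    convert (hV.isClosed_compl.preimage continuous_snd).inter hball using 1
    ext p
    simp [F]
  have hmono : Antitone F := fun k k' hk p hp => ⟨hp.1, fun i hi => hp.2 i (hi.trans hk)⟩
  obtain ⟨C, k, hC⟩ := IsShadowingSep.exists_card_le_mul_exp_of_sepGrowthLE (S := T) (V := V) hT hF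
    hmono hδ hb hb' fun z => (hgrowth z).mono le_rfl
      (fun x hx => ⟨fun n => (hx n).2 n le_rfl, (hx 0).1⟩) le_rfl
  refine ⟨C, fun n z A hA hAz hAV => hC n z A ⟨hA, fun x hx t ht => ?_, hAV⟩⟩
  refine or_iff_not_imp_left.2 fun hxV => ⟨hxV, fun i hi => ?_⟩
  rw [← Function.iterate_add_apply, ← Function.iterate_add_apply]
  exact hAz hx _ (by omega)

/-- Uniform growth over tubes: the `(n, ε)`-separated sets whose image under `π` lies in a Bowen
ball `bowenBall S n η y` have at most `C e^{bn}` points, with `C` independent of `n` and `y`. -/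
def TubeGrowthLE [PseudoMetricSpace X] [PseudoMetricSpace Y] (T : X → X) (S : Y → Y) (π : X → Y)
    (ε η b : ℝ) : Prop :=
  ∃ C : ℝ, ∀ (n : ℕ) (y : Y) (A : Finset X), IsSep T n ε (A : Set X) →
    (A : Set X) ⊆ π ⁻¹' bowenBall S n η y → (A.card : ℝ) ≤ C * Real.exp (b * n)

theorem TubeGrowthLE.sepGrowthLE [PseudoMetricSpace X] [PseudoMetricSpace Y] {T : X → X}
    {S : Y → Y} {π : X → Y} {ε η b c : ℝ} (h : TubeGrowthLE T S π ε η c) (hη : 0 ≤ η) {K : Set X}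
    (hK : SepGrowthLE S η (π '' K) b) : SepGrowthLE T ε K (b + c) := by
  obtain ⟨C, hC⟩ := h
  obtain ⟨D, hD⟩ := hK
  refine ⟨D * max C 0, fun n A hAK hA => ?_⟩
  obtain ⟨E, -, hEcard, hE⟩ := exists_subset_biUnion_bowenBall hη (hD n)
  have hcover : (A : Set X) ⊆ ⋃ e ∈ E, π ⁻¹' bowenBall S n η e := fun x hx => by
    simpa only [mem_iUnion₂, mem_preimage] using hE (mem_image_of_mem π (hAK hx))
  calc (A.card : ℝ) ≤ E.card * (C * Real.exp (c * n)) :=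
        card_le_card_mul_of_subset_biUnion hcover fun e _ B hB hBe =>
          hC n e B (hA.mono le_rfl le_rfl (Finset.coe_subset.2 hB)) hBe
    _ ≤ E.card * (max C 0 * Real.exp (c * n)) := by gcongr; exact le_max_left C 0
    _ ≤ D * Real.exp (b * n) * (max C 0 * Real.exp (c * n)) := by gcongr
    _ = D * max C 0 * Real.exp ((b + c) * n) := by rw [add_mul, Real.exp_add]; ring

theorem tubeGrowthLE_id_of_hStar_lt [PseudoMetricSpace X] [CompactSpace X] {T : X → X}
    (hT : Continuous T) {ε δ c : ℝ} (hδ : 0 < δ) (hc : 0 < c) (h : hStar T ε < c) :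
    TubeGrowthLE T T id δ ε c := by
  obtain ⟨a, ha, hac⟩ := EReal.lt_iff_exists_real_btwn.1 h
  rw [EReal.coe_lt_coe_iff] at hac
  obtain ⟨C, hC⟩ := exists_card_le_mul_exp_of_sepGrowthLE_diff hT isOpen_empty (δ := δ / 4)
    (b' := (a + c) / 2) (by positivity) hc (by linarith) fun z =>
      ((subEnt_le_iff hT).1 ((le_iSup (fun x => subEnt T (Phi T ε x)) z).trans ha.le) (δ / 4)
        (by positivity) ((a + c) / 2) (by linarith)).mono le_rfl sdiff_subset le_rfl
  refine ⟨C, fun n y A hA hAy => hC n y A ?_ hAy fun _ _ _ _ _ _ h => h.elim⟩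
  rwa [mul_div_cancel₀ δ four_ne_zero]

theorem SepGrowthLE.subEnt_le [PseudoMetricSpace X] [CompactSpace X] {T : X → X}
    (hT : Continuous T) {K : Set X} {ε b c : ℝ} (hK : SepGrowthLE T ε K b) (hε : 0 ≤ ε)
    (hc : 0 < c) (h : hStar T ε < c) : subEnt T K ≤ ((b + c : ℝ) : EReal) := by
  rw [← image_id K] at hK
  exact (subEnt_le_iff hT).2 fun δ hδ d hd =>
    ((tubeGrowthLE_id_of_hStar_lt hT hδ hc h).sepGrowthLE hε hK).mono le_rfl subset_rfl hd.le

section Factor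

variable [PseudoMetricSpace X] [CompactSpace X] [MetricSpace Y] {T : X → X} {S : Y → Y}
  {π : X → Y}

theorem exists_tubeGrowthLE_of_relEnt_le_zero [CompactSpace Y] (hT : Continuous T)
    (hπ : Continuous π) (hsemi : Function.Semiconj π T S) (hrel : relEnt T π ≤ 0) {ε τ : ℝ}
    (hε : 0 < ε) (hτ : 0 < τ) : ∃ η > 0, TubeGrowthLE T S π ε η τ := by
  let F : ℕ → Set (Y × X) := fun k => {p | dist p.1 (π p.2) ≤ 1 / ((k : ℝ) + 1)}
  have hF : ∀ k, IsClosed (F k) := fun k =>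
    isClosed_le (continuous_fst.dist (hπ.comp continuous_snd)) continuous_const
  have hmono : Antitone F := fun k k' hk p hp =>
    le_trans (α := ℝ) hp (Nat.one_div_le_one_div hk)
  have hfiber : ∀ y, {x | ∀ k, (y, x) ∈ F k} ⊆ π ⁻¹' {y} := fun y x hx =>
    (dist_le_zero.1 (ge_of_tendsto' (tendsto_one_div_add_atTop_nhds_zero_nat (𝕜 := ℝ)) hx)).symm
  obtain ⟨C, k, hC⟩ := IsShadowingSep.exists_card_le_mul_exp_of_sepGrowthLE (S := S) (V := ∅) hT
    hF hmono (δ := ε / 4) (by positivity) hτ (half_lt_self hτ) fun y =>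
      ((subEnt_le_iff hT).1 ((le_iSup (fun y => subEnt T (π ⁻¹' {y})) y).trans hrel) (ε / 4)
        (by positivity) (τ / 2) (by positivity)).mono le_rfl (hfiber y) le_rfl
  refine ⟨1 / ((k : ℝ) + 1), by positivity, C, fun n y A hA hAy =>
    hC n y A ⟨?_, fun x hx t ht => .inr ?_, fun _ _ _ _ _ _ h => h.elim⟩⟩
  · rwa [mul_div_cancel₀ ε four_ne_zero]
  · have := hAy hx t (by omega)
    rwa [← hsemi.iterate_right t x] at this

theorem exists_sepGrowthLE_image (hπ : Continuous π) (hsemi : Function.Semiconj π T S) {ε : ℝ}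
    (hε : 0 < ε) : ∃ η > 0, ∀ (K : Set X) (b : ℝ), SepGrowthLE T η K b →
      SepGrowthLE S ε (π '' K) b := by
  classical
  obtain ⟨η, hη, hunif⟩ := Metric.uniformContinuous_iff.1
    (CompactSpace.uniformContinuous_of_continuous hπ) ε hε
  refine ⟨η / 2, by positivity, fun K b ⟨C, hC⟩ => ⟨C, fun n E hEK hE => ?_⟩⟩
  obtain ⟨A, hAK, hinj, rfl⟩ :=
    Finset.exists_subset_injOn_image_eq_of_surjOn K E hEK
  rw [Finset.card_image_of_injOn hinj]
  refine hC n A hAK fun x hx x' hx' hne => ?_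
  obtain ⟨i, hi, hd⟩ := hE (Finset.mem_coe.2 (Finset.mem_image_of_mem π hx))
    (Finset.mem_coe.2 (Finset.mem_image_of_mem π hx')) (hinj.ne hx hx' hne)
  rw [← hsemi.iterate_right i x, ← hsemi.iterate_right i x'] at hd
  exact ⟨i, hi, not_le.1 fun hle => hd.not_gt (hunif (hle.trans_lt (half_lt_self hη)))⟩

variable [CompactSpace Y]

theorem subEnt_image (hT : Continuous T) (hS : Continuous S) (hπ : Continuous π)
    (hsemi : Function.Semiconj π T S) (hrel : relEnt T π ≤ 0) (K : Set X) :
    subEnt S (π '' K) = subEnt T K := by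
  refine le_antisymm ?_ ?_ <;> rw [← EReal.le_of_forall_lt_iff_le] <;> intro a ha
  · refine (subEnt_le_iff hS).2 fun ε hε b hb => ?_
    obtain ⟨η, hη, himage⟩ := exists_sepGrowthLE_image hπ hsemi hε
    exact himage K b ((subEnt_le_iff hT).1 ha.le η hη b hb)
  · refine (subEnt_le_iff hT).2 fun ε hε b hb => ?_
    obtain ⟨η, hη, htube⟩ :=
      exists_tubeGrowthLE_of_relEnt_le_zero hT hπ hsemi hrel hε (half_pos (sub_pos.2 hb))
    exact (htube.sepGrowthLE hη.le ((subEnt_le_iff hS).1 ha.le η hη ((a + b) / 2)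
      (by linarith))).mono le_rfl subset_rfl (by linarith)

end Factor

theorem hStar_mono [PseudoMetricSpace X] {T : X → X} : Monotone (hStar T) := fun _ _ h =>
  iSup_mono fun _ => subEnt_mono fun _ hy n => (hy n).trans h

theorem hStar_nonneg [PseudoMetricSpace X] [Nonempty X] (T : X → X) {ε : ℝ} (hε : 0 ≤ ε) :
    0 ≤ hStar T ε := by
  obtain ⟨x⟩ := ‹Nonempty X›
  have hx : x ∈ Phi T ε x := fun n => by rwa [dist_self]
  exact (subEnt_nonneg T ⟨x, hx⟩).trans (le_iSup (fun x => subEnt T (Phi T ε x)) x)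

theorem asympHExpansive_iff [PseudoMetricSpace X] [Nonempty X] {T : X → X} :
    AsympHExpansive T ↔ ∀ τ : ℝ, 0 < τ → ∃ ε > 0, hStar T ε < τ := by
  refine ⟨fun h τ hτ => ?_, fun h => tendsto_order.2 ⟨fun a ha => ?_, fun a ha => ?_⟩⟩
  · obtain ⟨ε, hετ, hε⟩ := ((h.eventually_lt_const (EReal.coe_pos.2 hτ)).and
      self_mem_nhdsWithin).exists
    exact ⟨ε, hε, hετ⟩
  · filter_upwards [self_mem_nhdsWithin] with ε hε
    exact ha.trans_le (hStar_nonneg T (le_of_lt hε))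
  · obtain ⟨τ, hτ, hτa⟩ := EReal.lt_iff_exists_real_btwn.1 ha
    obtain ⟨ε, hε, hετ⟩ := h τ (EReal.coe_pos.1 hτ)
    filter_upwards [Ioo_mem_nhdsGT hε] with ε' hε'
    exact (hStar_mono hε'.2.le).trans_lt (hετ.trans hτa)

section Factor

variable [PseudoMetricSpace X] [CompactSpace X] [Nonempty X] [MetricSpace Y] [CompactSpace Y]
  [Nonempty Y] {T : X → X} {S : Y → Y} {π : X → Y}

theorem AsympHExpansive.of_factor (hT : Continuous T) (hS : Continuous S) (hπ : Continuous π)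
    (hsemi : Function.Semiconj π T S) (hrel : relEnt T π ≤ 0) (h : AsympHExpansive S) :
    AsympHExpansive T := by
  rw [asympHExpansive_iff] at h ⊢
  intro τ hτ
  obtain ⟨ε, hε, hετ⟩ := h τ hτ
  obtain ⟨η, hη, hunif⟩ := Metric.uniformContinuous_iff.1
    (CompactSpace.uniformContinuous_of_continuous hπ) ε hε
  have himage : ∀ x, π '' Phi T (η / 2) x ⊆ Phi S ε (π x) := by
    rintro x _ ⟨y, hy, rfl⟩ n
    rw [← hsemi.iterate_right n x, ← hsemi.iterate_right n y]
    exact (hunif ((hy n).trans_lt (half_lt_self hη))).le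
  refine ⟨η / 2, half_pos hη, (iSup_le fun x => ?_).trans_lt hετ⟩
  rw [← subEnt_image hT hS hπ hsemi hrel]
  exact (subEnt_mono (himage x)).trans (le_iSup (fun y => subEnt S (Phi S ε y)) (π x))

theorem AsympHExpansive.of_extension (hT : Continuous T) (hS : Continuous S) (hπ : Continuous π)
    (hsurj : Function.Surjective π) (hsemi : Function.Semiconj π T S) (hrel : relEnt T π ≤ 0)
    (h : AsympHExpansive T) : AsympHExpansive S := by
  rw [asympHExpansive_iff] at h ⊢
  intro τ hτ
  obtain ⟨ε, hε, hετ⟩ := h (τ / 4) (by positivity)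
  obtain ⟨η, hη, C, hC⟩ :=
    exists_tubeGrowthLE_of_relEnt_le_zero hT hπ hsemi hrel hε (by positivity : 0 < τ / 4)
  refine ⟨η, hη, (iSup_le fun y => ?_).trans_lt
    (EReal.coe_lt_coe_iff.2 (half_lt_self hτ))⟩
  have hfiber : SepGrowthLE T ε (π ⁻¹' Phi S η y) (τ / 4) :=
    ⟨C, fun n A hA hs => hC n y A hs (hA.trans (preimage_mono (Phi_subset_bowenBall y)))⟩
  rw [← image_preimage_eq (Phi S η y) hsurj, subEnt_image hT hS hπ hsemi hrel,
    show τ / 2 = τ / 4 + τ / 4 by ring]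
  exact hfiber.subEnt_le hT hε.le (by positivity) hετ

end Factor

/-! ### Hereditarily uniformly lowerable systems are asymptotically h-expansive -/

theorem isCompact_insert_iUnion_of_tendsto_smallSets [TopologicalSpace X] {ι : Type*} {p : X}
    {S : ι → Set X} (hS : ∀ i, IsCompact (S i)) (h : Tendsto S cofinite (𝓝 p).smallSets) :
    IsCompact (insert p (⋃ i, S i)) := by
  rw [isCompact_iff_ultrafilter_le_nhds]
  intro f hf
  by_cases hfp : (f : Filter X) ≤ 𝓝 p
  · exact ⟨p, mem_insert _ _, hfp⟩
  obtain ⟨U, hU, hUf⟩ := Filter.not_le.1 hfp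
  have hfin : {i | ¬S i ⊆ U}.Finite := tendsto_smallSets_iff.1 h U hU
  have hmem : (⋃ i ∈ {i | ¬S i ⊆ U}, S i) ∈ f := by
    filter_upwards [le_principal_iff.1 hf, Ultrafilter.compl_mem_iff_notMem.2 hUf] with x hx hxU
    obtain rfl | hx := hx
    · exact absurd (mem_of_mem_nhds hU) hxU
    · obtain ⟨i, hi⟩ := mem_iUnion.1 hx
      exact mem_biUnion (fun hsub : S i ⊆ U => hxU (hsub hi)) hi
  obtain ⟨x, hx, hfx⟩ :=
    (hfin.isCompact_biUnion fun i _ => hS i).ultrafilter_le_nhds f (le_principal_iff.2 hmem)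
  exact ⟨x, .inr (iUnion₂_subset_iUnion _ _ hx), hfx⟩

theorem tendsto_smallSets_of_subset_closedBall [PseudoMetricSpace X] {p : X} {S : ℕ → Set X}
    {r : ℕ → ℝ} (hr : Tendsto r atTop (𝓝 0)) (h : ∀ᶠ j in atTop, S j ⊆ closedBall p (r j)) :
    Tendsto S cofinite (𝓝 p).smallSets := by
  rw [Nat.cofinite_eq_atTop, tendsto_smallSets_iff]
  intro U hU
  obtain ⟨ε, hε, hεU⟩ := Metric.nhds_basis_closedBall.mem_iff.1 hU
  filter_upwards [h, hr.eventually_lt_const hε] with j hj hrj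
  exact hj.trans ((closedBall_subset_closedBall hrj.le).trans hεU)

theorem isClosed_Phi [PseudoMetricSpace X] {T : X → X} (hT : Continuous T) (ε : ℝ) (x : X) :
    IsClosed (Phi T ε x) := by
  rw [Phi, Set.ofPred_forall]
  exact isClosed_iInter fun n =>
    isClosed_le (continuous_const.dist (hT.iterate n)) continuous_const

theorem Phi_mono [PseudoMetricSpace X] {T : X → X} {ε ε' : ℝ} (h : ε ≤ ε') (x : X) :
    Phi T ε x ⊆ Phi T ε' x := fun _ hy n => (hy n).trans h

section MetricSpace

variable [MetricSpace X]

theorem exists_pos_le_forall_mul_le_dist (P : Finset X) (C : ℝ) {ε : ℝ} (hε : 0 < ε) :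
    ∃ r > 0, r ≤ ε ∧ ∀ p ∈ P, ∀ q ∈ P, p ≠ q → C * r ≤ dist p q := by
  classical
  have hP : ∀ᶠ r : ℝ in 𝓝[>] 0, ∀ pq ∈ P.offDiag, C * r ≤ dist pq.1 pq.2 := by
    refine (eventually_all_finset _).2 fun pq hpq => ?_
    have hlim : Tendsto (fun r : ℝ => C * r) (𝓝[>] 0) (𝓝 0) :=
      (Continuous.tendsto' (by fun_prop) 0 0 (mul_zero C)).mono_left nhdsWithin_le_nhds
    exact (hlim.eventually_lt_const (dist_pos.2 (Finset.mem_offDiag.1 hpq).2.2)).mono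
      fun r hr => hr.le
  obtain ⟨r, ⟨hPr, hr⟩, hr0⟩ := ((hP.and (Ioc_mem_nhdsGT hε)).and self_mem_nhdsWithin).exists
  exact ⟨r, hr0, hr.2, fun p hp q hq hne => hPr (p, q) (Finset.mem_offDiag.2 ⟨hp, hq, hne⟩)⟩

variable [CompactSpace X] {T : X → X} {τ : ℝ}

/- A point of the orbit of `Phi T r x` in the union `V` of small balls about `P` can only lie in the
ball of one given `p`, so visits to `V` do not contribute to the growth of separated sets. -/
theorem exists_le_subEnt_Phi_diff (hT : Continuous T) (hτ0 : 0 < τ)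
    (hτ : ∀ ε > 0, (τ : EReal) < hStar T ε) (P : Finset X) {ε : ℝ} (hε : 0 < ε) :
    ∃ z V, IsOpen V ∧ (P : Set X) ⊆ V ∧ (τ : EReal) ≤ subEnt T (Phi T ε z \ V) := by
  obtain ⟨r, hr, hrε, hP⟩ := exists_pos_le_forall_mul_le_dist P 4 hε
  obtain ⟨x, hx⟩ := lt_iSup_iff.1 (hτ r hr)
  obtain ⟨η, hη, b, hb, hgrowth⟩ : ∃ η > 0, ∃ b, τ < b ∧ ¬SepGrowthLE T η (Phi T r x) b := by
    simpa only [not_forall, exists_prop] using mt (subEnt_le_iff hT).2 hx.not_ge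
  let s := min r (η / 2)
  let V := ⋃ p ∈ P, ball p s
  have hs : 0 < s := lt_min hr (half_pos hη)
  have hV : IsOpen V := isOpen_biUnion fun _ _ => isOpen_ball
  suffices h : ∃ z, (τ : EReal) ≤ subEnt T (Phi T r z \ V) by
    obtain ⟨z, hz⟩ := h
    exact ⟨z, V, hV, fun p hp => mem_biUnion hp (mem_ball_self hs),
      hz.trans (subEnt_mono (sdiff_subset_sdiff_left (Phi_mono hrε z)))⟩
  by_contra! hall
  obtain ⟨C, hC⟩ := exists_card_le_mul_exp_of_sepGrowthLE_diff hT hV (δ := η / 4)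
    (by positivity) (hτ0.trans hb) hb fun z => SepGrowthLE.of_sepEnt_lt hT (by positivity)
      ((sepEnt_le_subEnt T (by positivity) _).trans_lt (hall z))
  refine hgrowth ⟨C, fun n E hE hsep => hC n x E ?_ (hE.trans (Phi_subset_bowenBall x)) ?_⟩
  · rwa [mul_div_cancel₀ η four_ne_zero]
  intro y hy y' hy' t _ hyV hyV'
  obtain ⟨p, hp, hyp⟩ := mem_iUnion₂.1 hyV
  obtain ⟨q, hq, hyq⟩ := mem_iUnion₂.1 hyV'
  rw [mem_ball] at hyp hyq
  have hsr : s ≤ r := min_le_left _ _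
  have hsη : s ≤ η / 2 := min_le_right _ _
  have hpq : p = q := by
    by_contra hne
    linarith [hP p hp q hq hne, hE hy t, hE hy' t, dist_comm p (T^[t] y),
      dist_triangle_left (T^[t] y) (T^[t] y') (T^[t] x), dist_triangle4 p (T^[t] y) (T^[t] y') q]
  subst hpq
  linarith [dist_triangle_right (T^[t] y) (T^[t] y') p]

end MetricSpace

/-- A compact set `S` of entropy `c` and dynamical diameter at most `ε`, all of whose entropy sits
at its only possible limit point `p`. -/
structure IsEntropyCluster [PseudoMetricSpace X] (T : X → X) (S : Set X) (p : X) (ε c : ℝ) :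
    Prop where
  isCompact : IsCompact S
  mem : p ∈ S
  subset_Phi : ∀ x ∈ S, S ⊆ Phi T ε x
  subEnt_eq : subEnt T S = c
  eq_of_accPt : ∀ x, AccPt x (𝓟 S) → x = p

theorem IsEntropyCluster.mono [PseudoMetricSpace X] {T : X → X} {S : Set X} {p : X} {ε ε' c : ℝ}
    (h : IsEntropyCluster T S p ε c) (hε : ε ≤ ε') : IsEntropyCluster T S p ε' c :=
  { h with subset_Phi := fun x hx => (h.subset_Phi x hx).trans (Phi_mono hε x) }

theorem IsEntropyCluster.subset_bowenBall [PseudoMetricSpace X] {T : X → X} {S : Set X}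
    {p q : X} {ε c : ℝ} {n : ℕ} (h : IsEntropyCluster T S q ε c)
    (hq : q ∈ bowenBall T n ε p) : S ⊆ bowenBall T n (2 * ε) p := fun x hx => by
  rw [two_mul]
  exact mem_bowenBall_trans (mem_bowenBall_comm.1 hq)
    (Phi_subset_bowenBall q (h.subset_Phi q h.mem hx))

theorem IsEntropyCluster.finite_inter [PseudoMetricSpace X] {T : X → X} {S L : Set X} {p : X}
    {ε c : ℝ} (h : IsEntropyCluster T S p ε c) (hL : ¬AccPt p (𝓟 L)) : (L ∩ S).Finite := by
  by_contra hinf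
  obtain ⟨x, -, hx⟩ := Set.Infinite.exists_accPt_of_subset_isCompact hinf h.isCompact
    inter_subset_right
  obtain rfl := h.eq_of_accPt x (hx.mono (principal_mono.2 inter_subset_right))
  exact hL (hx.mono (principal_mono.2 inter_subset_left))

theorem HUL.exists_isEntropyCluster [MetricSpace X] [CompactSpace X] {T : X → X}
    (hT : Continuous T) (hul : HUL T) {τ : ℝ} (hτ : ∀ ε > 0, (τ : EReal) < hStar T ε)
    (P : Finset X) {ε c : ℝ} (hε : 0 < ε) (hc : 0 < c) (hcτ : c < τ) :
    ∃ p ∉ P, ∃ S, IsEntropyCluster T S p ε c := by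
  obtain ⟨z, V, hV, hPV, hle⟩ := exists_le_subEnt_Phi_diff hT (hc.trans hcτ) hτ P (half_pos hε)
  have hK : IsCompact (Phi T (ε / 2) z \ V) :=
    ((isClosed_Phi hT _ z).inter hV.isClosed_compl).isCompact
  have hne : (Phi T (ε / 2) z \ V).Nonempty := by
    by_contra! hempty
    rw [hempty, subEnt_empty] at hle
    exact (EReal.bot_lt_coe τ).not_ge hle
  obtain ⟨S, hSK, -, hS, hSc, hacc⟩ := hul _ hne hK c (EReal.coe_nonneg.2 hc.le)
    ((EReal.coe_le_coe_iff.2 hcτ.le).trans hle)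
  have hinf : S.Infinite := fun hfin => by
    have := subEnt_le_zero_of_finite T hfin
    rw [hSc, ← EReal.coe_zero, EReal.coe_le_coe_iff] at this
    exact this.not_gt hc
  obtain ⟨p, hpS, hp⟩ := hinf.exists_accPt_of_subset_isCompact hS subset_rfl
  refine ⟨p, fun hpP => (hSK hpS).2 (hPV hpP), S, hS, hpS, fun x hx y hy n => ?_, hSc,
    fun x hx => hacc hx hp⟩
  linarith [(hSK hx).1 n, (hSK hy).1 n, dist_triangle_left (T^[n] x) (T^[n] y) (T^[n] z)]

theorem exists_injective_forall_mem {Q : ℕ → Set X} (hQ : ∀ n, (Q n).Infinite) :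
    ∃ q : ℕ → X, Function.Injective q ∧ ∀ n, q n ∈ Q n := by
  classical
  choose t htQ ht using fun n => (hQ n).exists_subset_card_eq (n + 1)
  obtain ⟨q, hq, hqt⟩ := (Finset.all_card_le_biUnion_card_iff_exists_injective t).1 fun s => by
    obtain rfl | hs := s.eq_empty_or_nonempty
    · exact Nat.zero_le _
    calc s.card ≤ (Finset.range (s.max' hs + 1)).card :=
          Finset.card_le_card fun i hi => Finset.mem_range_succ_iff.2 (s.le_max' i hi)
      _ = (t (s.max' hs)).card := by rw [Finset.card_range, ht]
      _ ≤ (s.biUnion t).card :=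
          Finset.card_le_card (Finset.subset_biUnion_of_mem t (s.max'_mem hs))
  exact ⟨q, hq, fun n => htQ n (hqt n)⟩

theorem HUL.exists_seq_isEntropyCluster [MetricSpace X] [CompactSpace X] {T : X → X}
    (hT : Continuous T) (hul : HUL T) {τ : ℝ} (hτ0 : 0 < τ)
    (hτ : ∀ ε > 0, (τ : EReal) < hStar T ε) {ε : ℕ → ℝ} (hε : ∀ j, 0 < ε j) (hanti : Antitone ε) :
    ∃ (S : ℕ → Set X) (q : ℕ → X) (c : ℕ → ℝ) (p : X),
      (∀ j, IsEntropyCluster T (S j) (q j) (ε j) (c j)) ∧ Function.Injective q ∧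
      (∀ j, c j < τ) ∧ Tendsto c atTop (𝓝 τ) ∧ ∀ j, q j ∈ bowenBall T j (ε j) p := by
  obtain ⟨c, -, hc, hcτ⟩ := exists_seq_strictMono_tendsto' hτ0
  obtain ⟨q, hq, hqS⟩ := exists_injective_forall_mem
    (Q := fun j => {p | ∃ S, IsEntropyCluster T S p (ε j) (c j)}) fun j => by
      intro hfin
      obtain ⟨p, hp, hS⟩ :=
        hul.exists_isEntropyCluster hT hτ hfin.toFinset (hε j) (hc j).1 (hc j).2
      exact hp (hfin.mem_toFinset.2 hS)
  choose S hS using hqS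
  obtain ⟨p, φ, hφ, hlim⟩ := CompactSpace.tendsto_subseq q
  obtain ⟨ψ, hψ, hball⟩ := extraction_forall_of_eventually' fun j =>
    eventually_atTop.1 (hlim.eventually (bowenBall_mem_nhds hT j (hε j) p))
  refine ⟨S ∘ φ ∘ ψ, q ∘ φ ∘ ψ, c ∘ φ ∘ ψ, p,
    fun j => (hS _).mono (hanti ((hφ.comp hψ).id_le j)),
    hq.comp (hφ.comp hψ).injective, fun j => (hc _).2,
    hcτ.comp (hφ.comp hψ).tendsto_atTop, hball⟩

/- A point of `S j` is determined, within a separated set, by `min j n`: for `j ≥ n` all of these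
points lie in a single Bowen ball. -/
theorem IsSep.card_le_of_subset_iUnion [PseudoMetricSpace X] {T : X → X} {δ : ℝ} {p : X}
    {S : ℕ → Set X} (hball : ∀ j, S j ⊆ bowenBall T j (δ / 2) p)
    (hPhi : ∀ j, ∀ x ∈ S j, S j ⊆ Phi T δ x) {n : ℕ} {E : Finset X}
    (hE : IsSep T n δ (E : Set X)) (hES : (E : Set X) ⊆ ⋃ j, S j) : E.card ≤ n + 1 := by
  classical
  have hmem : ∀ x : E, ∃ j, (x : X) ∈ S j := fun x => mem_iUnion.1 (hES x.2)
  choose J hJ using hmem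
  have hinj : Function.Injective fun x : E => min (J x) n := fun x y hxy => by
    refine Subtype.ext (hE.eq_of_mem_bowenBall x.2 y.2 ?_)
    by_cases hx : J x < n
    · have hJxy : J x = J y := by
        simp only [min_def] at hxy
        split_ifs at hxy <;> omega
      exact Phi_subset_bowenBall _ (hPhi _ _ (hJ x) (hJxy ▸ hJ y))
    · have hxn : n ≤ J x := not_lt.1 hx
      have hyn : n ≤ J y := by
        simp only [min_def] at hxy
        split_ifs at hxy <;> omega
      rw [← add_halves δ]
      exact mem_bowenBall_trans (fun i hi => hball _ (hJ x) i (hi.trans_le hxn))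
        fun i hi => hball _ (hJ y) i (hi.trans_le hyn)
  calc E.card = Fintype.card E := (Fintype.card_coe E).symm
    _ ≤ (Finset.range (n + 1)).card := Finset.card_le_card_of_injOn (s := Finset.univ) _
        (fun x _ => Finset.mem_coe.2 (Finset.mem_range_succ_iff.2 (min_le_right (J x) n)))
        hinj.injOn
    _ = n + 1 := Finset.card_range _

theorem sepEnt_iUnion_le_zero [PseudoMetricSpace X] {T : X → X} {δ : ℝ} {p : X}
    {S : ℕ → Set X} (hball : ∀ j, S j ⊆ bowenBall T j (δ / 2) p)
    (hPhi : ∀ j, ∀ x ∈ S j, S j ⊆ Phi T δ x) : sepEnt T δ (⋃ j, S j) ≤ 0 := by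
  rw [← EReal.coe_zero, ← EReal.le_of_forall_lt_iff_le]
  intro b hb
  rw [EReal.coe_lt_coe_iff] at hb
  refine SepGrowthLE.sepEnt_le ⟨1 + 1 / b, fun n E hES hE => ?_⟩
  calc (E.card : ℝ) ≤ n + 1 := mod_cast hE.card_le_of_subset_iUnion hball hPhi hES
    _ ≤ (1 + 1 / b) * (b * n + 1) := by
      have : (1 + 1 / b) * (b * n + 1) = n + 1 + (b * n + 1 / b) := by field_simp; ring
      rw [this]
      exact le_add_of_nonneg_right (by positivity)
    _ ≤ (1 + 1 / b) * Real.exp (b * n) := by gcongr; exact Real.add_one_le_exp _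

section EntropyCluster

variable [PseudoMetricSpace X] {T : X → X} {S : ℕ → Set X} {q : ℕ → X} {ε c : ℕ → ℝ} {p : X}

theorem tendsto_smallSets_of_isEntropyCluster (hS : ∀ j, IsEntropyCluster T (S j) (q j) (ε j) (c j))
    (hε : Tendsto ε atTop (𝓝 0)) (hq : ∀ j, q j ∈ bowenBall T j (ε j) p) :
    Tendsto S cofinite (𝓝 p).smallSets := by
  have h2ε : Tendsto (fun j => 2 * ε j) atTop (𝓝 0) := by simpa using hε.const_mul 2
  refine tendsto_smallSets_of_subset_closedBall h2ε ?_
  filter_upwards [eventually_gt_atTop 0] with j hj x hx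
  rw [mem_closedBall']
  exact (hS j).subset_bowenBall (hq j) hx 0 hj

theorem sepEnt_iUnion_tail_le_zero (hS : ∀ j, IsEntropyCluster T (S j) (q j) (ε j) (c j))
    (hanti : Antitone ε) (hq : ∀ j, q j ∈ bowenBall T j (ε j) p) {δ : ℝ} {N : ℕ}
    (hN : 4 * ε N ≤ δ) : sepEnt T δ (⋃ j, S (j + N)) ≤ 0 := by
  have hεN : ∀ j, ε (j + N) ≤ ε N := fun j => hanti (Nat.le_add_left N j)
  have hε0 : 0 ≤ ε N := by
    simpa using (hS N).subset_Phi _ (hS N).mem (hS N).mem 0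
  refine sepEnt_iUnion_le_zero (p := p) (fun j x hx i hi => ?_) fun j x hx =>
    ((hS (j + N)).subset_Phi x hx).trans (Phi_mono (by linarith [hεN j]) x)
  linarith [(hS (j + N)).subset_bowenBall (hq (j + N)) hx i (by omega), hεN j]

theorem subEnt_le_of_subset_insert_iUnion (hS : ∀ j, IsEntropyCluster T (S j) (q j) (ε j) (c j))
    (hanti : Antitone ε) (hε : Tendsto ε atTop (𝓝 0)) (hq : ∀ j, q j ∈ bowenBall T j (ε j) p)
    {L : Set X} (hL : L ⊆ insert p (⋃ j, S j)) {j₀ : ℕ} (hfin : ∀ j ≠ j₀, (L ∩ S j).Finite) :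
    subEnt T L ≤ max 0 (subEnt T (S j₀)) := by
  refine iSup₂_le fun δ hδ => ?_
  obtain ⟨N, hN⟩ := (hε.eventually_lt_const (by positivity : 0 < δ / 4)).exists
  let F := insert p (⋃ j ∈ {j | j < N ∧ j ≠ j₀}, L ∩ S j)
  have hF : F.Finite := (((finite_lt_nat N).subset fun j hj => hj.1).biUnion
    fun j hj => hfin j hj.2).insert p
  have hcover : L ⊆ S j₀ ∪ (F ∪ ⋃ j, S (j + N)) := fun x hx => by
    obtain rfl | hxS := hL hx
    · exact .inr (.inl (mem_insert _ _))
    obtain ⟨j, hj⟩ := mem_iUnion.1 hxS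
    obtain rfl | hne := eq_or_ne j j₀
    · exact .inl hj
    obtain hjN | hjN := lt_or_ge j N
    · exact .inr (.inl (.inr (mem_biUnion (⟨hjN, hne⟩ : j < N ∧ j ≠ j₀) ⟨hx, hj⟩)))
    · exact .inr (.inr (mem_iUnion.2 ⟨j - N, by rwa [Nat.sub_add_cancel hjN]⟩))
  calc sepEnt T δ L ≤ sepEnt T δ (S j₀ ∪ (F ∪ ⋃ j, S (j + N))) := sepEnt_mono hcover
    _ ≤ max (sepEnt T δ (S j₀)) (max (sepEnt T δ F) (sepEnt T δ (⋃ j, S (j + N)))) :=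
      sepEnt_union_le.trans (max_le_max le_rfl sepEnt_union_le)
    _ ≤ max (subEnt T (S j₀)) (max 0 0) := max_le_max (sepEnt_le_subEnt T hδ _) (max_le_max
      ((sepEnt_le_subEnt T hδ F).trans (subEnt_le_zero_of_finite T hF))
      (sepEnt_iUnion_tail_le_zero hS hanti hq (by linarith)))
    _ = max 0 (subEnt T (S j₀)) := by rw [max_self, max_comm]

end EntropyCluster

/- Otherwise there are infinitely many clusters of entropy increasing to some `τ`, shrinking to a
point. Their union has entropy `τ`, but a subset with one limit point meets all clusters but one in
a finite set, so its entropy is at most that of a single cluster. -/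
theorem HUL.asympHExpansive [MetricSpace X] [CompactSpace X] [Nonempty X] {T : X → X}
    (hT : Continuous T) (hul : HUL T) : AsympHExpansive T := by
  rw [asympHExpansive_iff]
  by_contra! hcon
  obtain ⟨τ', hτ', hle⟩ := hcon
  obtain ⟨τ, hτ0, hττ'⟩ := exists_between hτ'
  have hτ : ∀ ε > 0, (τ : EReal) < hStar T ε := fun ε hε =>
    (EReal.coe_lt_coe_iff.2 hττ').trans_le (hle ε hε)
  let ε : ℕ → ℝ := fun j => 1 / ((j : ℝ) + 1)
  have hε : Tendsto ε atTop (𝓝 0) := tendsto_one_div_add_atTop_nhds_zero_nat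
  have hanti : Antitone ε := fun i j => Nat.one_div_le_one_div
  obtain ⟨S, q, c, p, hS, hqinj, hcτ, hc, hq⟩ :=
    hul.exists_seq_isEntropyCluster hT hτ0 hτ (fun j => Nat.one_div_pos_of_nat) hanti
  let K := insert p (⋃ j, S j)
  have hK : IsCompact K := isCompact_insert_iUnion_of_tendsto_smallSets
    (fun j => (hS j).isCompact) (tendsto_smallSets_of_isEntropyCluster hS hε hq)
  have hτK : (τ : EReal) ≤ subEnt T K :=
    le_of_tendsto' (continuous_coe_real_ereal.continuousAt.tendsto.comp hc) fun j =>
      (hS j).subEnt_eq.symm.trans_le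
        (subEnt_mono ((subset_iUnion S j).trans (subset_insert p _)))
  obtain ⟨L, hLK, -, -, hLτ, hL⟩ :=
    hul K (insert_nonempty _ _) hK τ (EReal.coe_nonneg.2 hτ0.le) hτK
  obtain ⟨j₀, hj₀⟩ : ∃ j₀, ∀ j ≠ j₀, ¬AccPt (q j) (𝓟 L) := by
    by_cases h : ∃ j₀, AccPt (q j₀) (𝓟 L)
    · obtain ⟨j₀, h₀⟩ := h
      exact ⟨j₀, fun j hj hacc => hj (hqinj (hL hacc h₀))⟩
    · exact ⟨0, fun j _ hacc => h ⟨j, hacc⟩⟩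
  have hLe := subEnt_le_of_subset_insert_iUnion hS hanti hε hq hLK fun j hj =>
    (hS j).finite_inter (hj₀ j hj)
  rw [hLτ, (hS j₀).subEnt_eq, le_max_iff, EReal.coe_nonpos, EReal.coe_le_coe_iff] at hLe
  exact hLe.elim hτ0.not_ge (hcτ j₀).not_ge

/-! ### Countable subsets carrying the entropy -/

theorem eq_of_accPt_insert_iUnion [TopologicalSpace X] [T2Space X] {ι : Type*} {p x : X}
    {S : ι → Set X} (hS : ∀ i, (S i).Finite) (h : Tendsto S cofinite (𝓝 p).smallSets)
    (hx : AccPt x (𝓟 (insert p (⋃ i, S i)))) : x = p := by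
  by_contra hne
  obtain ⟨U, V, hU, hV, hxU, hpV, hUV⟩ := t2_separation hne
  have hfin : {i | ¬S i ⊆ V}.Finite := tendsto_smallSets_iff.1 h V (hV.mem_nhds hpV)
  refine Set.Infinite.of_accPt (hx.nhds_inter (hU.mem_nhds hxU))
    ((hfin.biUnion fun i _ => hS i).subset ?_)
  rintro y ⟨hyU, rfl | hyS⟩
  · exact (hUV.ne_of_mem hyU hpV rfl).elim
  · obtain ⟨i, hi⟩ := mem_iUnion.1 hyS
    exact mem_biUnion (fun hsub : S i ⊆ V => hUV.ne_of_mem hyU (hsub hi) rfl) hi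

section Extraction

variable [PseudoMetricSpace X] {T : X → X}

theorem exists_forall_subEnt_le_inter [CompactSpace X] (T : X → X) {S : Set X}
    (hS : S.Nonempty) : ∃ z ∈ closure S, ∀ U ∈ 𝓝 z, subEnt T S ≤ subEnt T (S ∩ U) := by
  by_contra! hcon
  have hlt : subEnt T (S ∩ closure S) < subEnt T S := by
    refine isClosed_closure.isCompact.induction_on (p := fun K => subEnt T (S ∩ K) < subEnt T S)
      ?_ (fun K K' hK => (subEnt_mono (inter_subset_inter_right S hK)).trans_lt)
      (fun K K' hK hK' => ?_) fun z hz => ?_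
    · rw [inter_empty, subEnt_empty]
      exact EReal.bot_lt_zero.trans_le (subEnt_nonneg T hS)
    · rw [inter_union_distrib_left]
      exact (subEnt_union_le T _ _).trans_lt (max_lt hK hK')
    · obtain ⟨U, hU, hUlt⟩ := hcon z hz
      exact ⟨U, mem_nhdsWithin_of_mem_nhds hU, hUlt⟩
  rw [inter_eq_self_of_subset_left subset_closure] at hlt
  exact hlt.false

theorem AsympHExpansive.exists_forall_lt_sepEnt [CompactSpace X] [Nonempty X]
    (hT : Continuous T) (hA : AsympHExpansive T) {h a : EReal} (ha : a < h) :
    ∃ ε > 0, ∀ K : Set X, h ≤ subEnt T K → a < sepEnt T ε K := by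
  obtain ⟨b, hab, hbh⟩ := EReal.lt_iff_exists_real_btwn.1 ha
  obtain ⟨d, hbd, hdh⟩ := EReal.lt_iff_exists_real_btwn.1 hbh
  have hdb : 0 < d - b := sub_pos.2 (EReal.coe_lt_coe_iff.1 hbd)
  obtain ⟨ε, hε, hεd⟩ := asympHExpansive_iff.1 hA (d - b) hdb
  refine ⟨ε, hε, fun K hK => hab.trans_le ?_⟩
  by_contra! hlt
  have hle := (SepGrowthLE.of_sepEnt_lt hT hε hlt).subEnt_le hT hε.le hdb hεd
  rw [add_sub_cancel] at hle
  exact (hdh.trans_le hK).not_ge hle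

theorem exists_isSep_exp_le_card {ε : ℝ} {a : EReal} {K : Set X} (h : a < sepEnt T ε K) (k : ℕ) :
    ∃ n ≥ k, ∃ E : Finset X, (E : Set X) ⊆ K ∧ IsSep T n ε (E : Set X) ∧
      EReal.exp (a * n) ≤ E.card := by
  obtain ⟨r, har, hr⟩ := EReal.lt_iff_exists_real_btwn.1 h
  obtain ⟨s, hrs, hs⟩ := EReal.lt_iff_exists_real_btwn.1 hr
  obtain ⟨n, hexp, hn⟩ :=
    ((ExpGrowth.frequently_exp_le hs).and_eventually (eventually_ge_atTop (k + 1))).exists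
  have hlt : EReal.exp (r * n) < EReal.exp (s * n) := EReal.exp_lt_exp_iff.2 <| by
    have hn0 : (0 : ℝ) < n := Nat.cast_pos.2 (by omega)
    exact mod_cast mul_lt_mul_of_pos_right (EReal.coe_lt_coe_iff.1 hrs) hn0
  obtain ⟨E, ⟨hEK, hE⟩, hlt⟩ := (lt_iSup_iff.1 (hlt.trans_le hexp)).imp fun _ => lt_iSup_iff.1
  refine ⟨n, by omega, E, hEK, hE, le_trans ?_ hlt.le⟩
  gcongr

theorem exists_finite_subsets_le_sepEnt_iUnion {K : ℕ → Set X} {ε : ℕ → ℝ} {a : ℕ → EReal}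
    (h : ∀ j k, a j < sepEnt T (ε j) (K k)) :
    ∃ F : ℕ → Set X, (∀ k, (F k).Finite) ∧ (∀ k, F k ⊆ K k) ∧
      ∀ j, a j ≤ sepEnt T (ε j) (⋃ k, F k) := by
  choose n hn E hEK hE hcard using fun j k => exists_isSep_exp_le_card (h j k) k
  refine ⟨fun k => ⋃ j ∈ Iic k, E j k, fun k => (finite_Iic k).biUnion fun j _ =>
    (E j k).finite_toSet, fun k => iUnion₂_subset fun j _ => hEK j k, fun j => ?_⟩
  refine Frequently.le_expGrowthSup (frequently_atTop.2 fun N => ?_)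
  let k := max N j
  have hsub : (E j k : Set X) ⊆ ⋃ k, ⋃ j ∈ Iic k, (E j k : Set X) :=
    fun x hx => mem_iUnion.2 ⟨k, mem_biUnion (le_max_right N j : j ∈ Iic k) hx⟩
  exact ⟨n j k, (le_max_left N j).trans (hn j k), (hcard j k).trans
    ((hE j k).card_le_sepMaxCard hsub)⟩

end Extraction

/- Full entropy persists in all neighbourhoods of some `z`. By `SepGrowthLE.subEnt_le` it is visible
at scales independent of the neighbourhood, so finite separated sets chosen ever closer to `z`
carry all of it. -/
theorem AsympHExpansive.exists_subset_closure [MetricSpace X] [CompactSpace X] {T : X → X}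
    (hT : Continuous T) (hA : AsympHExpansive T) {S : Set X} (hS : S.Nonempty) :
    ∃ L ⊆ closure S, L.Nonempty ∧ IsCompact L ∧ subEnt T L = subEnt T S ∧
      {x | AccPt x (𝓟 L)}.Subsingleton := by
  have : Nonempty X := hS.to_subtype.map Subtype.val
  obtain ⟨z, hz, hzS⟩ := exists_forall_subEnt_le_inter T hS
  obtain ⟨a, -, ha, hlim⟩ :=
    exists_seq_strictMono_tendsto' (EReal.bot_lt_zero.trans_le (subEnt_nonneg T hS))
  choose ε hε hlt using fun j => hA.exists_forall_lt_sepEnt hT (ha j).2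
  let r : ℕ → ℝ := fun k => 1 / ((k : ℝ) + 1)
  have hr : Tendsto r atTop (𝓝 0) := tendsto_one_div_add_atTop_nhds_zero_nat
  obtain ⟨F, hFfin, hF, haF⟩ := exists_finite_subsets_le_sepEnt_iUnion (T := T)
    (K := fun k => S ∩ closedBall z (r k)) fun j k =>
      hlt j _ (hzS _ (closedBall_mem_nhds z Nat.one_div_pos_of_nat))
  have hFz : Tendsto F cofinite (𝓝 z).smallSets := tendsto_smallSets_of_subset_closedBall hr
    (Eventually.of_forall fun k => (hF k).trans inter_subset_right)
  have hFS : ⋃ k, F k ⊆ S := iUnion_subset fun k => (hF k).trans inter_subset_left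
  refine ⟨insert z (⋃ k, F k), insert_subset hz (hFS.trans subset_closure), insert_nonempty _ _,
    isCompact_insert_iUnion_of_tendsto_smallSets (fun k => (hFfin k).isCompact) hFz,
    le_antisymm ?_ ?_, fun x hx y hy => (eq_of_accPt_insert_iUnion hFfin hFz hx).trans
      (eq_of_accPt_insert_iUnion hFfin hFz hy).symm⟩
  · calc subEnt T (insert z (⋃ k, F k)) ≤ subEnt T ({z} ∪ S) :=
          subEnt_mono (union_subset_union_right {z} hFS)
      _ ≤ max (subEnt T {z}) (subEnt T S) := subEnt_union_le T _ _
      _ = subEnt T S := by rw [subEnt_singleton, max_eq_right (subEnt_nonneg T hS)]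
  · exact le_of_tendsto' hlim fun j => (haF j).trans
      ((sepEnt_le_subEnt T (hε j) _).trans (subEnt_mono (subset_insert z _)))

/-! ### Lowerability and extensions of zero relative entropy -/

theorem exists_accPt_of_accPt_image [TopologicalSpace X] [CompactSpace X] [TopologicalSpace Y]
    [T2Space Y] {π : X → Y} (hπ : Continuous π) {L : Set X} {y : Y}
    (hy : AccPt y (𝓟 (π '' L))) : ∃ x, π x = y ∧ AccPt x (𝓟 L) := by
  rw [accPt_principal_iff_clusterPt, ← mem_closure_iff_clusterPt, ← image_sdiff_preimage,
    hπ.isClosedMap.closure_image_eq_of_continuous hπ] at hy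
  obtain ⟨x, hx, rfl⟩ := hy
  refine ⟨x, rfl, ?_⟩
  rw [accPt_principal_iff_clusterPt, ← mem_closure_iff_clusterPt]
  have hsub : L \ π ⁻¹' {π x} ⊆ L \ {x} := fun w hw => ⟨hw.1, fun h => hw.2 (congrArg π h)⟩
  exact closure_mono hsub hx

section Factor

variable [MetricSpace X] [CompactSpace X] [MetricSpace Y] [CompactSpace Y] {T : X → X} {S : Y → Y}
  {π : X → Y}

theorem asympHExpansive_iff_of_relEnt_le_zero (hT : Continuous T) (hS : Continuous S)
    (hπ : Continuous π) (hsurj : Function.Surjective π) (hsemi : Function.Semiconj π T S)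
    (hrel : relEnt T π ≤ 0) : AsympHExpansive T ↔ AsympHExpansive S := by
  cases isEmpty_or_nonempty X with
  | inl hX =>
    have hY : IsEmpty Y := ⟨fun y => hX.elim (hsurj y).choose⟩
    simp only [AsympHExpansive, hStar, iSup_of_empty]
  | inr hX =>
    have hY : Nonempty Y := hX.map π
    exact ⟨.of_extension hT hS hπ hsurj hsemi hrel, .of_factor hT hS hπ hsemi hrel⟩

theorem lowerable_iff_of_relEnt_le_zero (hT : Continuous T) (hS : Continuous S)
    (hπ : Continuous π) (hsurj : Function.Surjective π) (hsemi : Function.Semiconj π T S)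
    (hrel : relEnt T π ≤ 0) : Lowerable T ↔ Lowerable S := by
  have himage := subEnt_image hT hS hπ hsemi hrel
  have huniv : subEnt T univ = subEnt S univ := by rw [← himage, image_univ_of_surjective hsurj]
  rw [Lowerable, Lowerable, huniv]
  refine forall₃_congr fun a _ _ => ⟨?_, ?_⟩
  · rintro ⟨K, hK, hKc, hKa⟩
    exact ⟨π '' K, hK.image π, hKc.image hπ, by rw [himage, hKa]⟩
  · rintro ⟨K, hK, hKc, hKa⟩
    refine ⟨π ⁻¹' K, hK.preimage hsurj, (hKc.isClosed.preimage hπ).isCompact, ?_⟩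
    rw [← himage, image_preimage_eq _ hsurj, hKa]

theorem herLowerable_iff_of_relEnt_le_zero (hT : Continuous T) (hS : Continuous S)
    (hπ : Continuous π) (hsurj : Function.Surjective π) (hsemi : Function.Semiconj π T S)
    (hrel : relEnt T π ≤ 0) : HerLowerable T ↔ HerLowerable S := by
  have himage := subEnt_image hT hS hπ hsemi hrel
  refine ⟨fun h K hK hKc a ha haK => ?_, fun h K hK hKc a ha haK => ?_⟩
  · obtain ⟨L, hLK, hL, hLc, hLa⟩ := h (π ⁻¹' K) (hK.preimage hsurj)
      (hKc.isClosed.preimage hπ).isCompact a ha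
      (by rwa [← himage, image_preimage_eq _ hsurj])
    exact ⟨π '' L, image_subset_iff.2 hLK, hL.image π, hLc.image hπ, by rw [himage, hLa]⟩
  · obtain ⟨L, hLK, hL, hLc, hLa⟩ := h (π '' K) (hK.image π) (hKc.image hπ) a ha
      (by rwa [himage])
    have hinter : π '' (K ∩ π ⁻¹' L) = L := by
      rw [image_inter_preimage, inter_eq_self_of_subset_right hLK]
    exact ⟨K ∩ π ⁻¹' L, inter_subset_left, image_nonempty.1 (hinter.symm ▸ hL),
      hKc.inter_right (hLc.isClosed.preimage hπ), by rw [← himage, hinter, hLa]⟩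

theorem HUL.of_extension (hT : Continuous T) (hS : Continuous S) (hπ : Continuous π)
    (hsurj : Function.Surjective π) (hsemi : Function.Semiconj π T S) (hrel : relEnt T π ≤ 0)
    (h : HUL T) : HUL S := fun K hK hKc a ha haK => by
  have himage := subEnt_image hT hS hπ hsemi hrel
  obtain ⟨L, hLK, hL, hLc, hLa, hacc⟩ := h (π ⁻¹' K) (hK.preimage hsurj)
    (hKc.isClosed.preimage hπ).isCompact a ha (by rwa [← himage, image_preimage_eq _ hsurj])
  refine ⟨π '' L, image_subset_iff.2 hLK, hL.image π, hLc.image hπ, by rw [himage, hLa], ?_⟩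
  intro y hy y' hy'
  obtain ⟨x, rfl, hx⟩ := exists_accPt_of_accPt_image hπ hy
  obtain ⟨x', rfl, hx'⟩ := exists_accPt_of_accPt_image hπ hy'
  rw [hacc hx hx']

theorem HUL.of_factor (hT : Continuous T) (hS : Continuous S) (hπ : Continuous π)
    (hsemi : Function.Semiconj π T S) (hrel : relEnt T π ≤ 0) (h : HUL S) :
    HUL T := fun K hK hKc a ha haK => by
  have himage := subEnt_image hT hS hπ hsemi hrel
  have : Nonempty X := hK.to_subtype.map Subtype.val
  have : Nonempty Y := this.map π
  have hA : AsympHExpansive T := (h.asympHExpansive hS).of_factor hT hS hπ hsemi hrel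
  obtain ⟨L, hLK, hL, -, hLa, -⟩ := h (π '' K) (hK.image π) (hKc.image hπ) a ha (by rwa [himage])
  have hinter : π '' (K ∩ π ⁻¹' L) = L := by
    rw [image_inter_preimage, inter_eq_self_of_subset_right hLK]
  obtain ⟨M, hMK, hM, hMc, hMa, hacc⟩ :=
    hA.exists_subset_closure hT (image_nonempty.1 (hinter.symm ▸ hL))
  exact ⟨M, hMK.trans (closure_minimal inter_subset_left hKc.isClosed), hM, hMc,
    by rw [hMa, ← himage, hinter, hLa], hacc⟩

theorem hul_iff_of_relEnt_le_zero (hT : Continuous T) (hS : Continuous S)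
    (hπ : Continuous π) (hsurj : Function.Surjective π) (hsemi : Function.Semiconj π T S)
    (hrel : relEnt T π ≤ 0) : HUL T ↔ HUL S :=
  ⟨.of_extension hT hS hπ hsurj hsemi hrel, .of_factor hT hS hπ hsemi hrel⟩

end Factor

/-! ### Shannon entropy of finite codes -/

theorem sum_mul_negMulLog_div_le {α : Type*} {t : Finset α} {a s : α → ℝ} (ha : ∀ j ∈ t, 0 ≤ a j)
    (has : ∀ j ∈ t, a j ≤ s j) : ∑ j ∈ t, s j * Real.negMulLog (a j / s j) ≤
      (∑ j ∈ t, s j) * Real.negMulLog ((∑ j ∈ t, a j) / ∑ j ∈ t, s j) := by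
  have hs : ∀ j ∈ t, 0 ≤ s j := fun j hj => (ha j hj).trans (has j hj)
  rcases (Finset.sum_nonneg hs).eq_or_lt with hS | hS
  · have hzero := (Finset.sum_eq_zero_iff_of_nonneg hs).1 hS.symm
    rw [← hS, zero_mul, Finset.sum_eq_zero fun j hj => by rw [hzero j hj, zero_mul]]
  have hjensen := Real.concaveOn_negMulLog.le_map_sum (t := t) (w := fun j => s j / ∑ k ∈ t, s k)
    (p := fun j => a j / s j) (fun j hj => div_nonneg (hs j hj) hS.le)
    (by rw [← Finset.sum_div, div_self hS.ne']) fun j hj => div_nonneg (ha j hj) (hs j hj)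
  have hmean : ∑ j ∈ t, (s j / ∑ k ∈ t, s k) • (a j / s j) = (∑ j ∈ t, a j) / ∑ j ∈ t, s j := by
    rw [Finset.sum_div]
    refine Finset.sum_congr rfl fun j hj => ?_
    rcases eq_or_ne (s j) 0 with h | h
    · simp [h, le_antisymm (h ▸ has j hj) (ha j hj)]
    · rw [smul_eq_mul]; field_simp
  rw [hmean] at hjensen
  refine le_of_eq_of_le ?_ (mul_le_mul_of_nonneg_left hjensen hS.le)
  rw [Finset.mul_sum]
  refine Finset.sum_congr rfl fun j _ => ?_
  rw [smul_eq_mul]; field_simp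

section Shannon

variable {Ω Ω' ι κ l m : Type*} [MeasurableSpace Ω] [MeasurableSpace Ω'] [Fintype ι] [Fintype κ]
  [Fintype l] [Fintype m]

/-- The Shannon entropy of the partition of `Ω` into the level sets of `f`. Simple functions with
values in a finite type encode finite measurable partitions, possibly with empty atoms. -/
def shannonEnt (μ : Measure Ω) (f : SimpleFunc Ω ι) : ℝ :=
  ∑ i, Real.negMulLog (μ.real (f ⁻¹' {i}))

/-- The conditional Shannon entropy `H_μ(f | g)`. -/
def condEnt (μ : Measure Ω) (f : SimpleFunc Ω ι) (g : SimpleFunc Ω κ) : ℝ :=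
  shannonEnt μ (f.pair g) - shannonEnt μ g

variable {μ : Measure Ω} {f : SimpleFunc Ω ι} {g : SimpleFunc Ω κ} {h : SimpleFunc Ω l}

theorem sum_measureReal_fiber_inter [IsFiniteMeasure μ] (f : SimpleFunc Ω ι) (s : Set Ω) :
    ∑ i, μ.real (f ⁻¹' {i} ∩ s) = μ.real s := by
  have h := sum_measureReal_preimage_singleton (μ := μ.restrict s) Finset.univ
    fun i _ => f.measurableSet_fiber i
  simpa [measureReal_restrict_apply (f.measurableSet_fiber _)] using h

theorem sum_measureReal_fiber [IsProbabilityMeasure μ] (f : SimpleFunc Ω ι) :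
    ∑ i, μ.real (f ⁻¹' {i}) = 1 := by
  simpa using sum_measureReal_fiber_inter (μ := μ) f univ

theorem shannonEnt_pair : shannonEnt μ (f.pair g) =
    ∑ k, ∑ i, Real.negMulLog (μ.real (f ⁻¹' {i} ∩ g ⁻¹' {k})) := by
  simp only [shannonEnt, Fintype.sum_prod_type_right, SimpleFunc.pair_preimage_singleton]

theorem shannonEnt_pair_comm : shannonEnt μ (f.pair g) = shannonEnt μ (g.pair f) := by
  rw [shannonEnt_pair, shannonEnt_pair, Finset.sum_comm]
  simp only [inter_comm]

theorem condEnt_eq_sum [IsFiniteMeasure μ] (f : SimpleFunc Ω ι) (g : SimpleFunc Ω κ) :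
    condEnt μ f g = ∑ k, ∑ i, μ.real (g ⁻¹' {k}) *
      Real.negMulLog (μ.real (f ⁻¹' {i} ∩ g ⁻¹' {k}) / μ.real (g ⁻¹' {k})) := by
  rw [condEnt, shannonEnt_pair, shannonEnt, ← Finset.sum_sub_distrib]
  refine Finset.sum_congr rfl fun k _ => ?_
  have hsum := sum_measureReal_fiber_inter (μ := μ) f (g ⁻¹' {k})
  rcases eq_or_ne (μ.real (g ⁻¹' {k})) 0 with hk | hk
  · have hzero : ∀ i, μ.real (f ⁻¹' {i} ∩ g ⁻¹' {k}) = 0 := fun i =>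
      measureReal_mono_null inter_subset_right hk
    simp [hk, hzero]
  have hterm : ∀ i, Real.negMulLog (μ.real (f ⁻¹' {i} ∩ g ⁻¹' {k})) =
      μ.real (f ⁻¹' {i} ∩ g ⁻¹' {k}) / μ.real (g ⁻¹' {k}) * Real.negMulLog (μ.real (g ⁻¹' {k})) +
        μ.real (g ⁻¹' {k}) *
          Real.negMulLog (μ.real (f ⁻¹' {i} ∩ g ⁻¹' {k}) / μ.real (g ⁻¹' {k})) := fun i => by
    rw [← Real.negMulLog_mul, mul_div_cancel₀ _ hk]
  rw [Finset.sum_congr rfl fun i _ => hterm i, Finset.sum_add_distrib, ← Finset.sum_mul,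
    ← Finset.sum_div, hsum, div_self hk]
  ring

theorem condEnt_nonneg [IsFiniteMeasure μ] : 0 ≤ condEnt μ f g := by
  rw [condEnt_eq_sum]
  refine Finset.sum_nonneg fun k _ => Finset.sum_nonneg fun i _ => ?_
  have hle : μ.real (f ⁻¹' {i} ∩ g ⁻¹' {k}) ≤ μ.real (g ⁻¹' {k}) :=
    measureReal_mono inter_subset_right
  exact mul_nonneg measureReal_nonneg (Real.negMulLog_nonneg (by positivity)
    (div_le_one_of_le₀ hle measureReal_nonneg))

theorem condEnt_eq_zero [IsFiniteMeasure μ] (hfg : ∀ x y, g x = g y → f x = f y) :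
    condEnt μ f g = 0 := by
  rw [condEnt_eq_sum]
  refine Finset.sum_eq_zero fun k _ => Finset.sum_eq_zero fun i _ => ?_
  rcases (f ⁻¹' {i} ∩ g ⁻¹' {k}).eq_empty_or_nonempty with h | ⟨x, hxi, hxk⟩
  · simp [h]
  · have hsub : g ⁻¹' {k} ⊆ f ⁻¹' {i} := fun y (hy : g y = k) =>
      (hfg y x (hy.trans (Eq.symm hxk))).trans hxi
    rw [inter_eq_right.2 hsub]
    rcases eq_or_ne (μ.real (g ⁻¹' {k})) 0 with hk | hk <;> simp [hk]

theorem shannonEnt_mono [IsFiniteMeasure μ] (hgf : ∀ x y, f x = f y → g x = g y) :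
    shannonEnt μ g ≤ shannonEnt μ f :=
  calc shannonEnt μ g ≤ shannonEnt μ (f.pair g) := sub_nonneg.1 condEnt_nonneg
    _ = shannonEnt μ (g.pair f) := shannonEnt_pair_comm
    _ = shannonEnt μ f := sub_eq_zero.1 (condEnt_eq_zero hgf)

theorem shannonEnt_congr [IsFiniteMeasure μ] (hfg : ∀ x y, f x = f y ↔ g x = g y) :
    shannonEnt μ f = shannonEnt μ g :=
  (shannonEnt_mono fun x y => (hfg x y).2).antisymm (shannonEnt_mono fun x y => (hfg x y).1)

theorem condEnt_congr [IsFiniteMeasure μ] {f' : SimpleFunc Ω m}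
    (hgh : ∀ x y, g x = g y ↔ h x = h y) (hff' : ∀ x y, f x = f y ↔ f' x = f' y) :
    condEnt μ f g = condEnt μ f' h := by
  rw [condEnt, condEnt, shannonEnt_congr hgh, shannonEnt_congr (f := f.pair g) (g := f'.pair h)]
  simp [hgh, hff']

theorem condEnt_pair_le [IsFiniteMeasure μ] : condEnt μ f (g.pair h) ≤ condEnt μ f h := by
  rw [condEnt_eq_sum, condEnt_eq_sum, Fintype.sum_prod_type_right]
  refine Finset.sum_le_sum fun k _ => ?_
  rw [Finset.sum_comm]
  refine Finset.sum_le_sum fun i _ => ?_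
  have hlogsum := sum_mul_negMulLog_div_le (t := Finset.univ)
    (a := fun j => μ.real (g ⁻¹' {j} ∩ (f ⁻¹' {i} ∩ h ⁻¹' {k})))
    (s := fun j => μ.real (g ⁻¹' {j} ∩ h ⁻¹' {k})) (fun _ _ => measureReal_nonneg)
    fun _ _ => measureReal_mono (inter_subset_inter_right _ inter_subset_right)
  rw [sum_measureReal_fiber_inter, sum_measureReal_fiber_inter] at hlogsum
  simpa only [SimpleFunc.pair_preimage_singleton, inter_left_comm] using hlogsum

theorem condEnt_anti [IsFiniteMeasure μ] (hgh : ∀ x y, g x = g y → h x = h y) :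
    condEnt μ f g ≤ condEnt μ f h :=
  calc condEnt μ f g = condEnt μ f (g.pair h) :=
        condEnt_congr (by simpa using hgh) fun _ _ => Iff.rfl
    _ ≤ condEnt μ f h := condEnt_pair_le

theorem condEnt_pair_pair_le [IsFiniteMeasure μ] {f' : SimpleFunc Ω m} :
    condEnt μ (f.pair f') (g.pair h) ≤ condEnt μ f g + condEnt μ f' h := by
  have hchain : condEnt μ (f.pair f') (g.pair h) =
      condEnt μ f (f'.pair (g.pair h)) + condEnt μ f' (g.pair h) := by
    rw [condEnt, condEnt, condEnt,
      shannonEnt_congr (f := (f.pair f').pair (g.pair h)) (g := f.pair (f'.pair (g.pair h)))]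
    · ring
    · simp [and_assoc]
  rw [hchain]
  exact add_le_add (condEnt_anti (by simp +contextual)) (condEnt_anti (by simp +contextual))

theorem shannonEnt_const [IsProbabilityMeasure μ] (i : ι) :
    shannonEnt μ (SimpleFunc.const Ω i) = 0 := by
  classical
  refine Finset.sum_eq_zero fun j _ => ?_
  rw [show SimpleFunc.const Ω i ⁻¹' {j} = _ from preimage_const i {j}]
  split_ifs <;> simp

theorem shannonEnt_pair_le [IsProbabilityMeasure μ] :
    shannonEnt μ (f.pair g) ≤ shannonEnt μ f + shannonEnt μ g := by
  have hmono := condEnt_anti (μ := μ) (f := f) (g := g) (h := SimpleFunc.const Ω ()) (by simp)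
  rw [condEnt, condEnt, shannonEnt_const,
    shannonEnt_congr (f := f.pair (SimpleFunc.const Ω ())) (g := f) (by simp)] at hmono
  linarith

theorem shannonEnt_le_log_card [IsProbabilityMeasure μ] (S : Finset ι)
    (hS : ∀ i ∉ S, μ.real (f ⁻¹' {i}) = 0) : shannonEnt μ f ≤ Real.log S.card := by
  have hsum : ∑ i ∈ S, μ.real (f ⁻¹' {i}) = 1 := by
    rw [Finset.sum_subset S.subset_univ fun i _ hi => hS i hi, sum_measureReal_fiber]
  have hcard : (S.card : ℝ) ≠ 0 := by
    rintro h
    simp [Finset.card_eq_zero.1 (Nat.cast_eq_zero.1 h)] at hsum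
  have hlogsum := sum_mul_negMulLog_div_le (t := S) (a := fun i => μ.real (f ⁻¹' {i}))
    (s := 1) (fun _ _ => measureReal_nonneg) fun _ _ => measureReal_le_one
  simp only [Pi.one_apply, one_mul, div_one, Finset.sum_const, nsmul_eq_mul, mul_one, hsum]
    at hlogsum
  rw [shannonEnt,
    ← Finset.sum_subset S.subset_univ fun i _ hi => by rw [hS i hi, Real.negMulLog_zero]]
  refine hlogsum.trans_eq ?_
  rw [Real.negMulLog, one_div, Real.log_inv]
  field_simp

theorem sum_condEnt_le {α : Type*} (t : Finset α) (ν : α → Measure Ω)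
    [∀ j, IsFiniteMeasure (ν j)] :
    ∑ j ∈ t, condEnt (ν j) f g ≤ condEnt (∑ j ∈ t, ν j) f g := by
  simp only [condEnt_eq_sum]
  rw [Finset.sum_comm]
  refine Finset.sum_le_sum fun k _ => ?_
  rw [Finset.sum_comm]
  refine Finset.sum_le_sum fun i _ => ?_
  have hreal : ∀ s, (∑ j ∈ t, ν j).real s = ∑ j ∈ t, (ν j).real s := fun s => by
    simp [Measure.real, ENNReal.toReal_sum]
  simp only [hreal]
  exact sum_mul_negMulLog_div_le (fun _ _ => measureReal_nonneg)
    fun _ _ => measureReal_mono inter_subset_right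

theorem condEnt_smul [IsFiniteMeasure μ] (c : NNReal) :
    condEnt (c • μ) f g = c * condEnt μ f g := by
  simp only [condEnt_eq_sum, measureReal_nnreal_smul_apply, Finset.mul_sum]
  refine Finset.sum_congr rfl fun k _ => Finset.sum_congr rfl fun i _ => ?_
  rcases eq_or_ne c 0 with rfl | hc
  · simp
  · rw [mul_div_mul_left _ _ (NNReal.coe_ne_zero.2 hc), mul_assoc]

theorem shannonEnt_map {s : Ω' → Ω} {ν : Measure Ω'} (hs : Measurable s) :
    shannonEnt (ν.map s) f = shannonEnt ν (f.comp s hs) := by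
  simp only [shannonEnt, map_measureReal_apply hs (f.measurableSet_fiber _), SimpleFunc.coe_comp,
    preimage_comp]

theorem condEnt_map {s : Ω' → Ω} {ν : Measure Ω'} (hs : Measurable s) :
    condEnt (ν.map s) f g = condEnt ν (f.comp s hs) (g.comp s hs) := by
  rw [condEnt, shannonEnt_map hs, shannonEnt_map hs]; rfl

theorem log_card_le_shannonEnt_uniformOn [MeasurableSingletonClass Ω] {E : Finset Ω}
    (hinj : InjOn f E) :
    Real.log E.card ≤ shannonEnt (ProbabilityTheory.uniformOn (E : Set Ω)) f := by
  classical
  have hfiber : ∀ i, (ProbabilityTheory.uniformOn (E : Set Ω)).real (f ⁻¹' {i}) =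
      if i ∈ E.image f then (E.card : ℝ)⁻¹ else 0 := fun i => by
    split_ifs with hi
    · obtain ⟨x, hx, rfl⟩ := Finset.mem_image.1 hi
      have hinter : (E : Set Ω) ∩ f ⁻¹' {f x} = ({x} : Finset Ω) := by
        ext y
        simp only [mem_inter_iff, Finset.mem_coe, mem_preimage, mem_singleton_iff,
          Finset.coe_singleton]
        exact ⟨fun ⟨hy, hxy⟩ => hinj hy hx hxy, by rintro rfl; exact ⟨hx, rfl⟩⟩
      rw [Measure.real, ← ProbabilityTheory.uniformOn_inter_self E.finite_toSet, hinter]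
      rw [ProbabilityTheory.uniformOn_apply_finset, Finset.inter_singleton_of_mem hx]
      simp
    · have hinter : (E : Set Ω) ∩ f ⁻¹' {i} = ∅ :=
        eq_empty_of_forall_notMem fun y ⟨hy, hyi⟩ => hi (Finset.mem_image.2 ⟨y, hy, hyi⟩)
      rw [Measure.real, ← ProbabilityTheory.uniformOn_inter_self E.finite_toSet, hinter]
      simp
  simp only [shannonEnt, hfiber, apply_ite Real.negMulLog, Real.negMulLog_zero, Finset.sum_ite_mem,
    Finset.univ_inter, Finset.sum_const, Finset.card_image_of_injOn hinj, nsmul_eq_mul]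
  rw [Real.negMulLog, Real.log_inv]
  rcases eq_or_ne (E.card : ℝ) 0 with h | h
  · simp [h]
  · field_simp; rfl

end Shannon

/-! ### Itineraries and Kolmogorov–Sinai entropy -/

section Codes

variable {Ω ι κ α : Type*} [MeasurableSpace Ω] [Fintype ι] [Fintype κ]

/-- The finite family of codes `f a`, regarded as one code. -/
def piCode [Finite α] (f : α → SimpleFunc Ω ι) : SimpleFunc Ω (α → ι) where
  toFun x a := f a x
  measurableSet_fiber' w := by
    simpa only [preimage, mem_singleton_iff, funext_iff, ofPred_forall] using
      MeasurableSet.iInter fun a => (f a).measurableSet_fiber (w a)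
  finite_range' := toFinite _

/-- The code recording `f x, f (T x), …, f (T^{n-1} x)`, whose level sets are the atoms of the join
of the partitions `T^{-i} f`, `i < n`. -/
def itinerary {T : Ω → Ω} (hT : Measurable T) (f : SimpleFunc Ω ι) (n : ℕ) :
    SimpleFunc Ω (Fin n → ι) :=
  piCode fun i => f.comp T^[i] (hT.iterate i)

variable {T : Ω → Ω} (hT : Measurable T) {f : SimpleFunc Ω ι} {n m : ℕ} {x y : Ω}

@[simp]
theorem itinerary_apply (f : SimpleFunc Ω ι) (n : ℕ) (x : Ω) (i : Fin n) :
    itinerary hT f n x i = f (T^[i] x) := rfl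

theorem itinerary_eq_itinerary :
    itinerary hT f n x = itinerary hT f n y ↔ ∀ i < n, f (T^[i] x) = f (T^[i] y) := by
  simp [funext_iff, Fin.forall_iff]

theorem itinerary_succ_eq_itinerary_succ :
    itinerary hT f (n + 1) x = itinerary hT f (n + 1) y ↔
      itinerary hT f n x = itinerary hT f n y ∧ f (T^[n] x) = f (T^[n] y) := by
  simp only [itinerary_eq_itinerary, Nat.forall_lt_succ_right]

theorem itinerary_add_eq_itinerary_add (hn : itinerary hT f n x = itinerary hT f n y)
    (hm : itinerary hT f m (T^[n] x) = itinerary hT f m (T^[n] y)) :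
    itinerary hT f (n + m) x = itinerary hT f (n + m) y := by
  rw [itinerary_eq_itinerary] at hn hm ⊢
  intro i hi
  rcases lt_or_ge i n with h | h
  · exact hn i h
  · simpa only [← Function.iterate_add_apply, Nat.sub_add_cancel h] using hm (i - n) (by omega)

theorem itinerary_eq_itinerary_of_le (hmn : m ≤ n)
    (h : itinerary hT f n x = itinerary hT f n y) : itinerary hT f m x = itinerary hT f m y := by
  rw [itinerary_eq_itinerary] at h ⊢
  exact fun i hi => h i (hi.trans_le hmn)

variable {μ : Measure Ω}

theorem condEnt_itinerary_le [IsFiniteMeasure μ] (hμ : MeasurePreserving T μ μ)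
    (f : SimpleFunc Ω ι) (g : SimpleFunc Ω κ) (n : ℕ) :
    condEnt μ (itinerary hT f n) (itinerary hT g n) ≤ n * condEnt μ f g := by
  induction n with
  | zero =>
    rw [condEnt_eq_zero fun _ _ _ => Subsingleton.elim _ _, Nat.cast_zero, zero_mul]
  | succ n ih =>
    have hn := hT.iterate n
    calc condEnt μ (itinerary hT f (n + 1)) (itinerary hT g (n + 1))
        = condEnt μ ((itinerary hT f n).pair (f.comp T^[n] hn))
            ((itinerary hT g n).pair (g.comp T^[n] hn)) :=
          condEnt_congr (by simp [itinerary_succ_eq_itinerary_succ])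
            (by simp [itinerary_succ_eq_itinerary_succ])
      _ ≤ condEnt μ (itinerary hT f n) (itinerary hT g n) +
            condEnt μ (f.comp T^[n] hn) (g.comp T^[n] hn) := condEnt_pair_pair_le
      _ ≤ n * condEnt μ f g + condEnt μ f g := by
          rw [← condEnt_map hn, (hμ.iterate n).map_eq]
          gcongr
      _ = (n + 1 : ℕ) * condEnt μ f g := by push_cast; ring

theorem shannonEnt_itinerary_le [IsFiniteMeasure μ] (hμ : MeasurePreserving T μ μ)
    (f : SimpleFunc Ω ι) (g : SimpleFunc Ω κ) (n : ℕ) :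
    shannonEnt μ (itinerary hT f n) ≤ shannonEnt μ (itinerary hT g n) + n * condEnt μ f g :=
  calc shannonEnt μ (itinerary hT f n)
      ≤ shannonEnt μ ((itinerary hT f n).pair (itinerary hT g n)) :=
        shannonEnt_mono (by simp +contextual)
    _ = shannonEnt μ (itinerary hT g n) + condEnt μ (itinerary hT f n) (itinerary hT g n) := by
        rw [condEnt]; ring
    _ ≤ _ := by gcongr; exact condEnt_itinerary_le hT hμ f g n

/-- The measure need not be invariant. Sliding a window of length `m` along the orbit costs at most
one `m`-itinerary entropy per step, and the sums over shifted windows telescope. -/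
theorem mul_shannonEnt_itinerary_sub_le [IsProbabilityMeasure μ] (f : SimpleFunc Ω ι) (m n : ℕ) :
    m * (shannonEnt μ (itinerary hT f n) - shannonEnt μ (itinerary hT f m)) ≤
      ∑ t ∈ Finset.range n, shannonEnt (μ.map T^[t]) (itinerary hT f m) := by
  set H : ℕ → ℝ := fun n => shannonEnt μ (itinerary hT f n)
  have hwindow : ∀ t, H (t + m) ≤ H t + shannonEnt (μ.map T^[t]) (itinerary hT f m) := fun t => by
    rw [shannonEnt_map (hT.iterate t)]
    refine (shannonEnt_mono fun x y h => ?_).trans shannonEnt_pair_le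
    simp only [SimpleFunc.pair_apply, SimpleFunc.coe_comp, Function.comp_apply,
      Prod.mk.injEq] at h
    exact itinerary_add_eq_itinerary_add hT h.1 h.2
  have hmono : Monotone H := fun a b hab =>
    shannonEnt_mono fun x y => itinerary_eq_itinerary_of_le hT hab
  have htelescope : ∑ t ∈ Finset.range m, H (n + t) - ∑ t ∈ Finset.range m, H t =
      ∑ t ∈ Finset.range n, (H (t + m) - H t) := by
    have h₁ := Finset.sum_range_add H n m
    have h₂ := Finset.sum_range_add H m n
    simp only [Finset.sum_sub_distrib, add_comm _ m]
    rw [add_comm m n] at h₂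
    linarith
  have hlow : m * H n ≤ ∑ t ∈ Finset.range m, H (n + t) := by
    simpa using Finset.card_nsmul_le_sum (Finset.range m) _ (H n)
      fun t _ => hmono (Nat.le_add_right n t)
  have hhigh : ∑ t ∈ Finset.range m, H t ≤ m * H m := by
    simpa using Finset.sum_le_card_nsmul (Finset.range m) _ (H m)
      fun t ht => hmono (Finset.mem_range.1 ht).le
  have hsum : ∑ t ∈ Finset.range n, (H (t + m) - H t) ≤
      ∑ t ∈ Finset.range n, shannonEnt (μ.map T^[t]) (itinerary hT f m) :=
    Finset.sum_le_sum fun t _ => sub_left_le_of_le_add (hwindow t)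
  linarith

end Codes

section KolmogorovSinai

variable {Ω ι κ : Type*} [Fintype ι] [Fintype κ]

/-- The partition into the level sets of `f`, as a finset of sets. -/
def fiberPartition (f : Ω → ι) : Finset (Set Ω) :=
  letI := Classical.decEq (Set Ω)
  Finset.univ.image fun i => f ⁻¹' {i}

theorem mem_fiberPartition {f : Ω → ι} {A : Set Ω} :
    A ∈ fiberPartition f ↔ ∃ i, f ⁻¹' {i} = A := by
  simp [fiberPartition]

theorem covJoin_fiberPartition (f : Ω → ι) (g : Ω → κ) :
    covJoin (fiberPartition f) (fiberPartition g) = fiberPartition fun x => (f x, g x) := by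
  have hpair : ∀ i k, (fun x => (f x, g x)) ⁻¹' {(i, k)} = f ⁻¹' {i} ∩ g ⁻¹' {k} := fun i k => by
    ext x; simp
  ext A
  simp only [covJoin, Finset.mem_image, Finset.mem_product, mem_fiberPartition, Prod.exists, hpair]
  exact ⟨fun ⟨_, _, ⟨⟨i, rfl⟩, k, rfl⟩, hA⟩ => ⟨i, k, hA⟩,
    fun ⟨i, k, hA⟩ => ⟨_, _, ⟨⟨i, rfl⟩, k, rfl⟩, hA⟩⟩

theorem fiberPartition_equiv_comp (e : ι ≃ κ) (f : Ω → ι) :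
    fiberPartition (e ∘ f) = fiberPartition f := by
  ext A
  simp only [mem_fiberPartition, e.surjective.exists, preimage_comp, ← image_singleton (f := e),
    e.preimage_image]

theorem dynCov_fiberPartition [MeasurableSpace Ω] {T : Ω → Ω} (hT : Measurable T)
    (f : SimpleFunc Ω ι) (n : ℕ) :
    dynCov T (fiberPartition f) n = fiberPartition (itinerary hT f n) := by
  classical
  induction n with
  | zero =>
    ext A
    have hfiber : ∀ w, itinerary hT f 0 ⁻¹' {w} = univ := fun w =>
      eq_univ_of_forall fun x => Subsingleton.elim _ _
    simp [dynCov, mem_fiberPartition, hfiber, eq_comm]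
  | succ n ih =>
    have hshift : (fiberPartition f).image (fun A => T^[n] ⁻¹' A) = fiberPartition (f ∘ T^[n]) := by
      ext A
      simp [mem_fiberPartition, preimage_comp]
    have hsnoc : itinerary hT f (n + 1) = (Equiv.prodComm _ _).trans (Fin.snocEquiv fun _ => ι) ∘
        fun x => (itinerary hT f n x, (f ∘ T^[n]) x) := by
      funext x i
      refine Fin.lastCases ?_ (fun i => ?_) i <;> simp [Fin.snocEquiv]
    rw [hsnoc, fiberPartition_equiv_comp, ← covJoin_fiberPartition, ← ih, ← hshift, dynCov]
    congr!

variable [MeasurableSpace Ω] {T : Ω → Ω} {μ : Measure Ω}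

theorem partEnt_fiberPartition (μ : Measure Ω) (f : SimpleFunc Ω ι) :
    partEnt μ (fiberPartition f) = shannonEnt μ f := by
  classical
  have hsum := Finset.sum_image_of_disjoint (I := Finset.univ) (f := fun i => f ⁻¹' {i})
    (g := fun A => Real.negMulLog (μ.real A)) (by simp)
    fun i _ j _ hij => pairwise_disjoint_fiber f hij
  rw [shannonEnt, ← hsum]
  simp only [partEnt, fiberPartition, Real.negMulLog, Measure.real, neg_mul]
  congr!

theorem isFinPartition_fiberPartition (f : SimpleFunc Ω ι) : IsFinPartition (fiberPartition f) := by
  refine ⟨fun A hA => ?_, eq_univ_of_forall fun x => ?_, fun A hA B hB hAB => ?_⟩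
  · obtain ⟨i, rfl⟩ := mem_fiberPartition.1 hA
    exact f.measurableSet_fiber i
  · exact mem_sUnion.2 ⟨f ⁻¹' {f x}, mem_fiberPartition.2 ⟨f x, rfl⟩, rfl⟩
  · obtain ⟨i, rfl⟩ := mem_fiberPartition.1 hA
    obtain ⟨j, rfl⟩ := mem_fiberPartition.1 hB
    exact pairwise_disjoint_fiber f fun hij : i = j => hAB (by rw [hij])

theorem IsFinPartition.exists_fiberPartition_eq {P : Finset (Set Ω)} (hP : IsFinPartition P) :
    ∃ f : SimpleFunc Ω P, fiberPartition f = P := by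
  obtain ⟨hmeas, hcover, hdisj⟩ := hP
  have hatom : ∀ x, ∃ A : P, x ∈ A.1 := fun x => by
    obtain ⟨A, hA, hx⟩ := mem_sUnion.1 (hcover.symm ▸ mem_univ x)
    exact ⟨⟨A, hA⟩, hx⟩
  choose c hc using hatom
  have hfiber : ∀ A : P, c ⁻¹' {A} = A.1 := fun A => by
    ext x
    refine ⟨fun hx : c x = A => hx ▸ hc x, fun hx => Subtype.ext ?_⟩
    by_contra hne
    exact Set.disjoint_left.1 (hdisj (c x).2 A.2 hne) (hc x) hx
  refine ⟨⟨c, fun A => (hfiber A).symm ▸ hmeas _ A.2, toFinite _⟩, ?_⟩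
  ext A
  simp [mem_fiberPartition, hfiber]

theorem le_ksEntropy (hT : Measurable T) (f : SimpleFunc Ω ι) {c : ℝ}
    (h : ∀ n : ℕ, c * (n + 1) ≤ shannonEnt μ (itinerary hT f (n + 1))) :
    (c : EReal) ≤ ksEntropy T μ := by
  refine le_iSup₂_of_le (fiberPartition f) (isFinPartition_fiberPartition f)
    (le_iInf fun n => ?_)
  rw [dynCov_fiberPartition hT, partEnt_fiberPartition, EReal.coe_le_coe_iff,
    le_div_iff₀ (by positivity)]
  exact h n

theorem ksEntropy_le (hT : Measurable T) {a : EReal}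
    (h : ∀ (P : Finset (Set Ω)) (f : SimpleFunc Ω P),
      ⨅ n : ℕ, ((shannonEnt μ (itinerary hT f (n + 1)) / (n + 1) : ℝ) : EReal) ≤ a) :
    ksEntropy T μ ≤ a := by
  refine iSup₂_le fun P hP => ?_
  obtain ⟨f, hf⟩ := hP.exists_fiberPartition_eq
  have hent : ∀ n, partEnt μ (dynCov T P n) = shannonEnt μ (itinerary hT f n) := fun n => by
    rw [← partEnt_fiberPartition, ← dynCov_fiberPartition, hf]
  simpa only [hent] using h P f

theorem ksEntropy_nonneg [IsProbabilityMeasure μ] (hT : Measurable T) : 0 ≤ ksEntropy T μ := by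
  refine le_ksEntropy (c := 0) hT (SimpleFunc.const Ω ()) fun n => ?_
  rw [zero_mul, ← shannonEnt_const (μ := μ) ()]
  exact shannonEnt_mono fun _ _ _ => rfl

end KolmogorovSinai

/-! ### Codes with null boundaries -/

section MemCode

variable {Ω ι : Type*} [MeasurableSpace Ω] [Finite ι]

/-- The code `x ↦ {i | x ∈ B i}` of a finite family of measurable sets. -/
def memCode (B : ι → Set Ω) (hB : ∀ i, MeasurableSet (B i)) :
    SimpleFunc Ω (Set ι) where
  toFun x := {i | x ∈ B i}
  measurableSet_fiber' s := by
    simp only [preimage, mem_singleton_iff, Set.ext_iff, mem_ofPred_eq, ofPred_forall]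
    refine MeasurableSet.iInter fun i => ?_
    by_cases hi : i ∈ s
    · simpa [hi] using hB i
    · simp only [hi, iff_false]
      exact (hB i).compl
  finite_range' := toFinite _

@[simp]
theorem mem_memCode {B : ι → Set Ω} (hB : ∀ i, MeasurableSet (B i)) {x : Ω} {i : ι} :
    i ∈ memCode B hB x ↔ x ∈ B i := Iff.rfl

end MemCode

section NullBoundary

variable {Ω Ω' ι κ : Type*} [MeasurableSpace Ω] [TopologicalSpace Ω] [MeasurableSpace Ω']
  [TopologicalSpace Ω'] {μ : Measure Ω}

/-- `f` is locally constant at almost every point, i.e. almost no point lies on the boundary of a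
level set; this is what makes the entropy of `f` continuous under weak convergence to `μ`. -/
def AELocallyConst (μ : Measure Ω) (f : Ω → ι) : Prop :=
  ∀ᵐ x ∂μ, ∀ᶠ y in 𝓝 x, f y = f x

namespace AELocallyConst

variable {f : Ω → ι} {g : Ω → κ}

theorem prodMk (hf : AELocallyConst μ f) (hg : AELocallyConst μ g) :
    AELocallyConst μ fun x => (f x, g x) := by
  filter_upwards [hf, hg] with x hfx hgx
  filter_upwards [hfx, hgx] with y hfy hgy
  rw [hfy, hgy]

theorem pi {α : Type*} [Finite α] {f : α → Ω → ι} (hf : ∀ a, AELocallyConst μ (f a)) :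
    AELocallyConst μ fun x a => f a x := by
  filter_upwards [ae_all_iff.2 hf] with x hx
  filter_upwards [eventually_all.2 hx] with y hy
  exact funext hy

theorem comp_left (hf : AELocallyConst μ f) (φ : ι → κ) : AELocallyConst μ (φ ∘ f) := by
  filter_upwards [hf] with x hx
  filter_upwards [hx] with y hy
  rw [Function.comp_apply, hy, Function.comp_apply]

theorem comp_continuous {f : Ω' → ι} {s : Ω → Ω'} (hs : Continuous s) (hsm : AEMeasurable s μ)
    (hf : AELocallyConst (μ.map s) f) : AELocallyConst μ (f ∘ s) := by
  filter_upwards [ae_of_ae_map hsm hf] with x hx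
  exact hs.continuousAt.eventually hx

theorem measure_frontier_fiber (hf : AELocallyConst μ f) (i : ι) :
    μ (frontier (f ⁻¹' {i})) = 0 := by
  refine measure_mono_null ?_ (ae_iff.1 hf)
  intro x hx hconst
  by_cases hxi : f x = i
  · refine hx.2 (mem_interior_iff_mem_nhds.2 ?_)
    filter_upwards [hconst] with y hy using hy.trans hxi
  · refine mem_closure_iff_frequently.1 hx.1 ?_
    filter_upwards [hconst] with y hy hyi using hxi (hy.symm.trans hyi)

theorem itinerary [BorelSpace Ω] [Fintype ι] {T : Ω → Ω} (hT : Continuous T)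
    (hμ : MeasurePreserving T μ μ) {f : SimpleFunc Ω ι} (hf : AELocallyConst μ f) (n : ℕ) :
    AELocallyConst μ (itinerary hT.measurable f n) :=
  pi fun i : Fin n => comp_continuous (hT.iterate i) (hμ.iterate i).aemeasurable
    (by rwa [(hμ.iterate i).map_eq])

end AELocallyConst

theorem aelocallyConst_setOf_mem [Finite ι] {B : ι → Set Ω} (hB : ∀ i, μ (frontier (B i)) = 0) :
    AELocallyConst μ fun x => {i | x ∈ B i} := by
  refine AELocallyConst.pi (f := fun i x => x ∈ B i) fun i => ?_
  filter_upwards [measure_eq_zero_iff_ae_notMem.1 (hB i)] with x hx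
  by_cases hxB : x ∈ B i
  · filter_upwards [mem_interior_iff_mem_nhds.1
      (by_contra fun hint => hx ⟨subset_closure hxB, hint⟩)] with y hy
    simp [hxB, hy]
  · have hint : x ∈ interior (B i)ᶜ := by
      rw [interior_compl]
      exact fun hcl => hx ⟨hcl, fun h => hxB (interior_subset h)⟩
    filter_upwards [mem_interior_iff_mem_nhds.1 hint] with y hy
    simp [hxB, notMem_of_mem_compl hy]

theorem exists_code_of_pairwise_disjoint [Finite ι] {B : ι → Set Ω}
    (hB : ∀ i, MeasurableSet (B i)) (hdisj : Pairwise (Function.onFun Disjoint B))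
    (hfr : ∀ i, μ (frontier (B i)) = 0) :
    ∃ g : SimpleFunc Ω (Option ι), AELocallyConst μ g ∧ ∀ x i, g x = some i ↔ x ∈ B i := by
  classical
  let φ : Set ι → Option ι := fun s => if h : s.Nonempty then some h.some else none
  refine ⟨(memCode B hB).map φ, (aelocallyConst_setOf_mem hfr).comp_left φ, fun x i => ?_⟩
  simp only [SimpleFunc.map_apply, φ]
  split_ifs with h
  · have hx : x ∈ B h.some := h.some_mem
    rw [Option.some_inj]
    exact ⟨fun hi => hi ▸ hx, fun hi => hdisj.eq (not_disjoint_iff.2 ⟨x, hx, hi⟩)⟩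
  · simpa using fun hi => h ⟨i, hi⟩

section WeakConvergence

variable [OpensMeasurableSpace Ω] [HasOuterApproxClosed Ω] [Fintype ι] [Fintype κ] {α : Type*}
  {L : Filter α} {ν : ProbabilityMeasure Ω} {νs : α → ProbabilityMeasure Ω} {f : SimpleFunc Ω ι}
  {g : SimpleFunc Ω κ}

theorem tendsto_shannonEnt (h : Tendsto νs L (𝓝 ν)) (hf : AELocallyConst (ν : Measure Ω) f) :
    Tendsto (fun k => shannonEnt (νs k : Measure Ω) f) L (𝓝 (shannonEnt (ν : Measure Ω) f)) :=
  tendsto_finsetSum _ fun i _ => (Real.continuous_negMulLog.tendsto _).comp <|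
    (ENNReal.tendsto_toReal (measure_ne_top _ _)).comp <|
      ProbabilityMeasure.tendsto_measure_of_null_frontier_of_tendsto' h
        (hf.measure_frontier_fiber i)

theorem tendsto_condEnt (h : Tendsto νs L (𝓝 ν)) (hf : AELocallyConst (ν : Measure Ω) f)
    (hg : AELocallyConst (ν : Measure Ω) g) :
    Tendsto (fun k => condEnt (νs k : Measure Ω) f g) L (𝓝 (condEnt (ν : Measure Ω) f g)) :=
  (tendsto_shannonEnt h (hf.prodMk hg)).sub (tendsto_shannonEnt h hg)

end WeakConvergence

end NullBoundary

theorem exists_pairwise_disjoint_thickening {ι : Type*} [Finite ι] [PseudoEMetricSpace X]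
    {C : ι → Set X} (hC : ∀ i, IsCompact (C i)) (hcl : ∀ i, IsClosed (C i))
    (hdisj : Pairwise (Function.onFun Disjoint C)) :
    ∃ δ > 0, Pairwise (Function.onFun Disjoint fun i => thickening δ (C i)) := by
  have hpair : ∀ i j, ∀ᶠ δ : ℝ in 𝓝[>] 0,
      i ≠ j → Disjoint (thickening δ (C i)) (thickening δ (C j)) := fun i j => by
    by_cases hij : i = j
    · exact Eventually.of_forall fun δ h => absurd hij h
    · obtain ⟨r, hr, hdisj⟩ := (hdisj hij).exists_thickenings (hC i) (hcl j)
      filter_upwards [Ioo_mem_nhdsGT hr] with δ hδ _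
      exact hdisj.mono (thickening_mono hδ.2.le _) (thickening_mono hδ.2.le _)
  obtain ⟨δ, hδ, hδ0⟩ := ((eventually_all.2 fun i => eventually_all.2 (hpair i)).and
    self_mem_nhdsWithin).exists
  exact ⟨δ, hδ0, hδ⟩

/-- Level sets of distinct values `some i`, `some j` of the code `g` are at least `δ` apart. The
level set of `none` collects the points left undecided and is not constrained. -/
def IsSepCode {ι : Type*} [PseudoMetricSpace X] (g : X → Option ι) (δ : ℝ) : Prop :=
  ∀ ⦃x y : X⦄ ⦃i j : ι⦄, g x = some i → g y = some j → dist x y < δ → i = j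

section Approximation

theorem exists_pos_forall_condEnt_le {Ω ι : Type*} [MeasurableSpace Ω] [Fintype ι]
    (μ : Measure Ω) [IsFiniteMeasure μ] (c : SimpleFunc Ω ι) {η : ℝ} (hη : 0 < η) :
    ∃ θ > 0, ∀ g : SimpleFunc Ω (Option ι),
      (∀ i, μ.real (c ⁻¹' {i} \ g ⁻¹' {some i}) ≤ θ) → condEnt μ c g ≤ η := by
  classical
  -- `condEnt μ c g` depends continuously on the joint distribution `p` of `(c, g)`
  -- and vanishes at the joint distribution `p₀` of `(c, some ∘ c)`.
  let F : (ι → Option ι → ℝ) → ℝ := fun p =>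
    ∑ k, ∑ i, Real.negMulLog (p i k) - ∑ k, Real.negMulLog (∑ i, p i k)
  have hF : Continuous F := by
    have := Real.continuous_negMulLog
    fun_prop
  let p₀ : ι → Option ι → ℝ := fun i k => if k = some i then μ.real (c ⁻¹' {i}) else 0
  have hp₀ : F p₀ = 0 := by
    simp [F, p₀, Fintype.sum_option, apply_ite Real.negMulLog]
  obtain ⟨θ, hθ, hclose⟩ := Metric.eventually_nhds_iff_ball.1
    (hF.continuousAt.eventually (gt_mem_nhds (hp₀.trans_lt hη)))
  refine ⟨θ / 2, half_pos hθ, fun g hg => ?_⟩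
  let p : ι → Option ι → ℝ := fun i k => μ.real (c ⁻¹' {i} ∩ g ⁻¹' {k})
  have hcond : condEnt μ c g = F p := by
    simp only [condEnt, shannonEnt_pair, F, p, sum_measureReal_fiber_inter]; rfl
  have hdist : dist p p₀ ≤ θ / 2 := by
    refine (dist_pi_le_iff (half_pos hθ).le).2 fun i => (dist_pi_le_iff (half_pos hθ).le).2
      fun k => le_trans ?_ (hg i)
    rw [Real.dist_eq]
    by_cases hk : k = some i
    · have hsplit := measureReal_inter_add_sdiff (μ := μ) (s := c ⁻¹' {i})
        (g.measurableSet_fiber (some i))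
      simp only [p, p₀, hk, if_true, ← hsplit]
      rw [abs_sub_comm, add_sub_cancel_left, abs_of_nonneg measureReal_nonneg]
    · simp only [p, p₀, hk, if_false, sub_zero, abs_of_nonneg measureReal_nonneg]
      exact measureReal_mono fun x ⟨hxc, hxg⟩ => ⟨hxc, fun h => hk (Eq.trans (Eq.symm hxg) h)⟩
  rw [hcond]
  exact (hclose p (hdist.trans_lt (half_lt_self hθ))).le

variable {ι : Type*} [MetricSpace X] [CompactSpace X] [MeasurableSpace X] [BorelSpace X]

theorem exists_isSepCode_sdiff_le [Finite ι] (μ : Measure X) [IsFiniteMeasure μ]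
    (c : SimpleFunc X ι) {θ : ℝ} (hθ : 0 < θ) : ∃ g : SimpleFunc X (Option ι), AELocallyConst μ g ∧
      (∃ δ > 0, IsSepCode g δ) ∧ ∀ i, μ.real (c ⁻¹' {i} \ g ⁻¹' {some i}) ≤ θ := by
  have hinner : ∀ i, ∃ K ⊆ c ⁻¹' {i}, IsCompact K ∧ μ (c ⁻¹' {i} \ K) < ENNReal.ofReal θ :=
    fun i => (c.measurableSet_fiber i).exists_isCompact_sdiff_lt (measure_ne_top _ _)
      (by simpa using hθ)
  choose C hCc hCcompact hCμ using hinner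
  obtain ⟨δ, hδ, hdisj⟩ := exists_pairwise_disjoint_thickening hCcompact
    (fun i => (hCcompact i).isClosed) fun i j hij =>
      (pairwise_disjoint_fiber c hij).mono (hCc i) (hCc j)
  choose r hr hfr using fun i => exists_null_frontier_thickening μ (C i) (half_pos hδ)
  have hsub : ∀ i, thickening (r i) (C i) ⊆ thickening δ (C i) := fun i =>
    thickening_mono ((hr i).2.le.trans (half_le_self hδ.le)) _
  obtain ⟨g, hg, hgB⟩ := exists_code_of_pairwise_disjoint (B := fun i => thickening (r i) (C i))
    (fun i => isOpen_thickening.measurableSet)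
    (fun i j hij => (hdisj hij).mono (hsub i) (hsub j)) hfr
  refine ⟨g, hg, ⟨δ / 2, half_pos hδ, fun x y i j hx hy hxy => ?_⟩, fun i => ?_⟩
  · obtain ⟨z, hz, hyz⟩ := mem_thickening_iff.1 ((hgB y j).1 hy)
    have hxj : x ∈ thickening δ (C j) := mem_thickening_iff.2
      ⟨z, hz, by linarith [dist_triangle x y z, (hr j).2]⟩
    exact hdisj.eq (not_disjoint_iff.2 ⟨x, hsub i ((hgB x i).1 hx), hxj⟩)
  · have hC : C i ⊆ g ⁻¹' {some i} := fun x hx =>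
      (hgB x i).2 (self_subset_thickening (hr i).1 _ hx)
    exact (measureReal_mono (sdiff_subset_sdiff_right hC)).trans
      (ENNReal.toReal_le_of_le_ofReal hθ.le (hCμ i).le)

theorem exists_isSepCode_condEnt_le [Fintype ι] (μ : Measure X) [IsFiniteMeasure μ]
    (c : SimpleFunc X ι) {η : ℝ} (hη : 0 < η) : ∃ g : SimpleFunc X (Option ι), AELocallyConst μ g ∧
      (∃ δ > 0, IsSepCode g δ) ∧ condEnt μ c g ≤ η := by
  obtain ⟨θ, hθ, hcond⟩ := exists_pos_forall_condEnt_le μ c hη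
  obtain ⟨g, hg, hsep, herr⟩ := exists_isSepCode_sdiff_le μ c hθ
  exact ⟨g, hg, hsep, hcond g herr⟩

theorem exists_code_dist_le (μ : Measure X) [IsFiniteMeasure μ] {ε : ℝ} (hε : 0 < ε) :
    ∃ (t : Finset X) (f : SimpleFunc X (Set t)),
      AELocallyConst μ f ∧ ∀ x y, f x = f y → dist x y ≤ ε := by
  choose r hr hfr using fun x : X => exists_null_frontier_thickening μ {x} (half_pos hε)
  simp only [thickening_singleton] at hfr
  obtain ⟨t, -, ht⟩ := isCompact_univ.elim_nhds_subcover (fun x => ball x (r x))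
    fun x _ => ball_mem_nhds x (hr x).1
  refine ⟨t, memCode (fun z : t => ball (z : X) (r z)) fun z => measurableSet_ball,
    aelocallyConst_setOf_mem fun z => hfr z, fun x y hxy => ?_⟩
  obtain ⟨z, hz, hxz⟩ := mem_iUnion₂.1 (ht (mem_univ x))
  have hyz : y ∈ ball z (r z) := by
    rwa [← mem_memCode (B := fun z : t => ball (z : X) (r z)) (fun z => measurableSet_ball)
      (i := ⟨z, hz⟩), ← hxy]
  linarith [dist_triangle_right x y z, mem_ball.1 hxz, mem_ball.1 hyz, (hr z).2]

end Approximation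

/-! ### Finiteness of Kolmogorov–Sinai entropy -/

section Goodwyn

variable {ι : Type*} {b ε δ : ℝ} {n : ℕ}

theorem IsSepCode.card_le_two_pow [PseudoMetricSpace X] {T : X → X} {g : X → Option ι}
    (hg : IsSepCode g δ) (hε : ε + ε < δ) {e : X} {W : Finset (Fin n → Option ι)}
    (hW : ∀ w ∈ W, ∃ x ∈ bowenBall T n ε e, ∀ i : Fin n, g (T^[i] x) = w i) : W.card ≤ 2 ^ n := by
  classical
  have hletters : ∀ i : Fin n, (W.image (· i)).card ≤ 2 := fun i => by
    suffices ((W.image (· i)).erase none).card ≤ 1 by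
      have := (W.image (· i)).pred_card_le_card_erase (a := none)
      omega
    refine Finset.card_le_one.2 fun u hu v hv => ?_
    rw [Finset.mem_erase, Option.ne_none_iff_exists', Finset.mem_image] at hu hv
    obtain ⟨⟨p, rfl⟩, w, hw, hwp⟩ := hu
    obtain ⟨⟨q, rfl⟩, w', hw', hwq⟩ := hv
    obtain ⟨x, hx, hxw⟩ := hW w hw
    obtain ⟨x', hx', hxw'⟩ := hW w' hw'
    rw [hg ((hxw i).trans hwp) ((hxw' i).trans hwq)
      ((mem_bowenBall_trans hx hx' i i.2).trans_lt hε)]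
  calc W.card ≤ (Fintype.piFinset fun i => W.image (· i)).card :=
        Finset.card_le_card fun w hw =>
          Fintype.mem_piFinset.2 fun i => Finset.mem_image_of_mem _ hw
    _ ≤ ∏ _i : Fin n, 2 := by
        rw [Fintype.card_piFinset]
        exact Finset.prod_le_prod' fun i _ => hletters i
    _ = 2 ^ n := by simp

variable [MetricSpace X] [MeasurableSpace X] {T : X → X} {μ : Measure X}

theorem IsSepCode.exists_shannonEnt_itinerary_le [Fintype ι] [IsProbabilityMeasure μ]
    {g : SimpleFunc X (Option ι)}
    (hg : IsSepCode g δ) (hT : Measurable T) (hε₀ : 0 ≤ ε) (hε : ε + ε < δ)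
    (hgrowth : SepGrowthLE T ε univ b) :
    ∃ C : ℝ, ∀ n : ℕ, shannonEnt μ (itinerary hT g n) ≤ C + (b + Real.log 2) * n := by
  obtain ⟨C, hC⟩ := hgrowth
  refine ⟨Real.log C, fun n => ?_⟩
  set W := (itinerary hT g n).range
  have hcard : (W.card : ℝ) ≤ C * (Real.exp (b * n) * 2 ^ n) := by
    obtain ⟨E, -, hE, hcov⟩ := exists_subset_biUnion_bowenBall hε₀ (hC n)
    refine (card_le_card_mul_of_subset_biUnion (E := E)
      (B := fun e => itinerary hT g n '' bowenBall T n ε e) (N := 2 ^ n) ?_ ?_).trans ?_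
    · intro w hw
      obtain ⟨x, rfl⟩ := SimpleFunc.mem_range.1 hw
      obtain ⟨e, he, hx⟩ := mem_iUnion₂.1 (hcov (mem_univ x))
      exact mem_iUnion₂.2 ⟨e, he, mem_image_of_mem _ hx⟩
    · intro e _ V _ hV
      refine mod_cast hg.card_le_two_pow (T := T) (e := e) hε fun w hw => ?_
      obtain ⟨x, hx, rfl⟩ := hV hw
      exact ⟨x, hx, fun i => rfl⟩
    · rw [← mul_assoc]
      gcongr
  have hWpos : (0 : ℝ) < W.card := by
    obtain ⟨x⟩ := nonempty_of_isProbabilityMeasure μ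
    exact_mod_cast Finset.card_pos.2 ⟨_, SimpleFunc.mem_range_self _ x⟩
  have hCpos : 0 < C := pos_of_mul_pos_left (hWpos.trans_le hcard) (by positivity)
  calc shannonEnt μ (itinerary hT g n) ≤ Real.log W.card :=
        shannonEnt_le_log_card W fun w hw => by
          rw [((itinerary hT g n).preimage_eq_empty_iff w).2 hw, measureReal_empty]
    _ ≤ Real.log (C * (Real.exp (b * n) * 2 ^ n)) := Real.log_le_log hWpos hcard
    _ = Real.log C + (b + Real.log 2) * n := by
        rw [Real.log_mul hCpos.ne' (by positivity), Real.log_mul (by positivity) (by positivity),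
          Real.log_exp, Real.log_pow]
        ring

theorem ksEntropy_lt_top [CompactSpace X] [BorelSpace X] [IsProbabilityMeasure μ]
    (hT : Continuous T) (hμ : MeasurePreserving T μ μ) (hfin : subEnt T univ < ⊤) :
    ksEntropy T μ < ⊤ := by
  obtain ⟨a, ha, -⟩ := EReal.lt_iff_exists_real_btwn.1 hfin
  refine lt_of_le_of_lt (ksEntropy_le (a := ((a + 1 + Real.log 2 + 2 : ℝ) : EReal))
    hT.measurable fun P f => ?_) (EReal.coe_lt_top _)
  obtain ⟨g, -, ⟨δ, hδ, hsep⟩, hfg⟩ := exists_isSepCode_condEnt_le μ f one_pos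
  obtain ⟨C, hC⟩ := hsep.exists_shannonEnt_itinerary_le (μ := μ) (ε := δ / 3) hT.measurable
    (by positivity) (by linarith) ((subEnt_le_iff hT).1 ha.le _ (by positivity) _ (lt_add_one a))
  obtain ⟨n, hn⟩ := exists_nat_ge C
  refine (iInf_le _ n).trans (EReal.coe_le_coe ((div_le_iff₀ (by positivity)).2 ?_))
  have hf := shannonEnt_itinerary_le hT.measurable hμ f g (n + 1)
  have hg := hC (n + 1)
  push_cast at hf hg
  have hfg' : (n + 1) * condEnt μ f g ≤ (n + 1) * 1 := by gcongr
  nlinarith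

end Goodwyn

/-! ### Invariant measures of large entropy relative to a factor -/

section OrbitAverage

variable {Ω : Type*} [MeasurableSpace Ω]

/-- The average of `σ` along the first `n` iterates of `T`. Its weak limits as `n → ∞` are
`T`-invariant even though `σ` need not be. -/
def orbitAverage (T : Ω → Ω) (σ : Measure Ω) (n : ℕ) : Measure Ω :=
  (n : NNReal)⁻¹ • ∑ t ∈ Finset.range n, σ.map T^[t]

variable {T : Ω → Ω} {σ : Measure Ω} [IsProbabilityMeasure σ] {n : ℕ}

theorem isProbabilityMeasure_orbitAverage (hT : Measurable T) (σ : Measure Ω)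
    [IsProbabilityMeasure σ] (hn : n ≠ 0) : IsProbabilityMeasure (orbitAverage T σ n) := by
  have := fun t => Measure.isProbabilityMeasure_map (μ := σ) (hT.iterate t).aemeasurable
  refine ⟨?_⟩
  rw [orbitAverage, Measure.smul_apply, Measure.finsetSum_apply]
  simp only [measure_univ, Finset.sum_const, Finset.card_range, nsmul_eq_mul, mul_one]
  rw [ENNReal.smul_def, ENNReal.coe_inv (by exact_mod_cast hn), ENNReal.coe_natCast, smul_eq_mul,
    ENNReal.inv_mul_cancel (by exact_mod_cast hn) (ENNReal.natCast_ne_top n)]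

theorem sum_condEnt_map_le_mul_condEnt_orbitAverage {ι κ : Type*} [Fintype ι] [Fintype κ]
    (hT : Measurable T) (f : SimpleFunc Ω ι) (g : SimpleFunc Ω κ) (hn : n ≠ 0) :
    ∑ t ∈ Finset.range n, condEnt (σ.map T^[t]) f g ≤ n * condEnt (orbitAverage T σ n) f g := by
  have := fun t => Measure.isProbabilityMeasure_map (μ := σ) (hT.iterate t).aemeasurable
  rw [orbitAverage, condEnt_smul, NNReal.coe_inv, NNReal.coe_natCast,
    mul_inv_cancel_left₀ (by exact_mod_cast hn)]
  exact sum_condEnt_le _ _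

variable [TopologicalSpace Ω]

theorem integral_orbitAverage [OpensMeasurableSpace Ω] (hT : Measurable T)
    (φ : BoundedContinuousFunction Ω ℝ) (n : ℕ) :
    ∫ x, φ x ∂orbitAverage T σ n = (n : ℝ)⁻¹ * ∑ t ∈ Finset.range n, ∫ x, φ (T^[t] x) ∂σ := by
  have := fun t => Measure.isProbabilityMeasure_map (μ := σ) (hT.iterate t).aemeasurable
  rw [orbitAverage, integral_smul_nnreal_measure,
    integral_finsetSum_measure fun t _ => φ.integrable _, NNReal.smul_def, NNReal.coe_inv,
    NNReal.coe_natCast, smul_eq_mul]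
  congr! 2 with t
  exact integral_map (hT.iterate t).aemeasurable φ.continuous.measurable.aestronglyMeasurable

theorem abs_integral_comp_sub_integral_orbitAverage_le [BorelSpace Ω] (hT : Continuous T)
    (φ : BoundedContinuousFunction Ω ℝ) (n : ℕ) :
    |∫ x, φ (T x) ∂orbitAverage T σ n - ∫ x, φ x ∂orbitAverage T σ n| ≤ 2 * ‖φ‖ / n := by
  have hshift : ∫ x, φ (T x) ∂orbitAverage T σ n =
      (n : ℝ)⁻¹ * ∑ t ∈ Finset.range n, ∫ x, φ (T^[t + 1] x) ∂σ := by
    simpa only [Function.iterate_succ_apply', BoundedContinuousFunction.compContinuous_apply,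
      ContinuousMap.coe_mk] using integral_orbitAverage hT.measurable (φ.compContinuous ⟨T, hT⟩) n
  have hbound : ∀ t, |∫ x, φ (T^[t] x) ∂σ| ≤ ‖φ‖ := fun t => by
    simpa using norm_integral_le_of_norm_le_const (μ := σ)
      (Eventually.of_forall fun x => φ.norm_coe_le_norm (T^[t] x))
  calc |∫ x, φ (T x) ∂orbitAverage T σ n - ∫ x, φ x ∂orbitAverage T σ n|
      = (n : ℝ)⁻¹ * |∫ x, φ (T^[n] x) ∂σ - ∫ x, φ (T^[0] x) ∂σ| := by
        rw [hshift, integral_orbitAverage hT.measurable φ, ← mul_sub, ← Finset.sum_sub_distrib,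
          Finset.sum_range_sub fun t => ∫ x, φ (T^[t] x) ∂σ, abs_mul, abs_of_nonneg (by positivity)]
    _ ≤ (n : ℝ)⁻¹ * (‖φ‖ + ‖φ‖) := by
        gcongr
        exact (abs_sub _ _).trans (add_le_add (hbound n) (hbound 0))
    _ = 2 * ‖φ‖ / n := by ring

variable [BorelSpace Ω] {α : Type*} {σ : α → Measure Ω} [∀ k, IsProbabilityMeasure (σ k)]
  {n : α → ℕ}

theorem measurePreserving_of_tendsto_orbitAverage [HasOuterApproxClosed Ω] (hT : Continuous T)
    {L : Filter α} [L.NeBot] (hn : Tendsto n L atTop) {μ : ProbabilityMeasure Ω}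
    {μs : α → ProbabilityMeasure Ω} (hμs : ∀ k, (μs k : Measure Ω) = orbitAverage T (σ k) (n k))
    (hlim : Tendsto μs L (𝓝 μ)) : MeasurePreserving T (μ : Measure Ω) μ := by
  refine ⟨hT.measurable, ?_⟩
  have := Measure.isProbabilityMeasure_map (μ := (μ : Measure Ω)) hT.measurable.aemeasurable
  refine ext_of_forall_integral_eq_of_IsFiniteMeasure fun φ => ?_
  rw [integral_map hT.measurable.aemeasurable φ.continuous.measurable.aestronglyMeasurable]
  have hintegral := ProbabilityMeasure.tendsto_iff_forall_integral_tendsto.1 hlim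
  have hdiff := (hintegral (φ.compContinuous ⟨T, hT⟩)).sub (hintegral φ)
  refine sub_eq_zero.1 (tendsto_nhds_unique hdiff (squeeze_zero_norm (fun k => ?_)
    (tendsto_const_nhds.div_atTop (tendsto_natCast_atTop_atTop.comp hn) :
      Tendsto (fun k => 2 * ‖φ‖ / n k) L (𝓝 0))))
  rw [hμs k]
  exact abs_integral_comp_sub_integral_orbitAverage_le hT φ (n k)

end OrbitAverage

theorem exists_measurePreserving_tendsto_orbitAverage [MetricSpace X] [CompactSpace X]
    [MeasurableSpace X] [BorelSpace X] {T : X → X} (hT : Continuous T) {α : Type*}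
    (L : Ultrafilter α) (σ : α → Measure X) [∀ k, IsProbabilityMeasure (σ k)] {n : α → ℕ}
    (hn₀ : ∀ k, n k ≠ 0) (hn : Tendsto n L atTop) :
    ∃ (μ : ProbabilityMeasure X) (μs : α → ProbabilityMeasure X),
      (∀ k, (μs k : Measure X) = orbitAverage T (σ k) (n k)) ∧ Tendsto μs L (𝓝 μ) ∧
      MeasurePreserving T (μ : Measure X) μ := by
  let μs : α → ProbabilityMeasure X := fun k =>
    ⟨orbitAverage T (σ k) (n k), isProbabilityMeasure_orbitAverage hT.measurable (σ k) (hn₀ k)⟩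
  obtain ⟨μ, -, hlim⟩ := isCompact_univ.ultrafilter_le_nhds (L.map μs) (by simp)
  exact ⟨μ, μs, fun _ => rfl, hlim,
    measurePreserving_of_tendsto_orbitAverage (μs := μs) hT hn (fun _ => rfl) hlim⟩

section RelativeEntropy

variable {Ω Ω' ι κ : Type*} [MeasurableSpace Ω] [MeasurableSpace Ω'] [Fintype ι] [Fintype κ]
  {T : Ω → Ω} {S : Ω' → Ω'} {π : Ω → Ω'} {μ : Measure Ω} {f : SimpleFunc Ω ι}
  {g : SimpleFunc Ω κ}

theorem itinerary_comp (hT : Measurable T) (hS : Measurable S) (hπ : Measurable π)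
    (hsemi : Function.Semiconj π T S) (g : SimpleFunc Ω' κ) (n : ℕ) :
    (itinerary hS g n).comp π hπ = itinerary hT (g.comp π hπ) n := by
  ext x i
  simp [(hsemi.iterate_right i).eq x]

theorem shannonEnt_itinerary_pair [IsFiniteMeasure μ] (hT : Measurable T) (f : SimpleFunc Ω ι)
    (g : SimpleFunc Ω κ) (n : ℕ) : shannonEnt μ (itinerary hT (f.pair g) n) =
      condEnt μ (itinerary hT f n) (itinerary hT g n) + shannonEnt μ (itinerary hT g n) := by
  rw [condEnt, sub_add_cancel]
  refine shannonEnt_congr fun x y => ?_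
  simp [itinerary_eq_itinerary, forall_and]

theorem shannonEnt_le_condEnt_of_ae_eq [IsProbabilityMeasure μ] {k : κ}
    (hg : ∀ᵐ x ∂μ, g x = k) : shannonEnt μ f ≤ condEnt μ f g := by
  have hg₀ : shannonEnt μ g ≤ Real.log ({k} : Finset κ).card :=
    shannonEnt_le_log_card {k} fun j hj => by
      refine (measureReal_eq_zero_iff (measure_ne_top _ _)).2
        (measure_mono_null ?_ (ae_iff.1 hg))
      exact fun x (hx : g x = j) hxk => hj (Finset.mem_singleton.2 (hx.symm.trans hxk))
  have hpair : shannonEnt μ f ≤ shannonEnt μ (f.pair g) := shannonEnt_mono (by simp +contextual)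
  rw [Finset.card_singleton, Nat.cast_one, Real.log_one] at hg₀
  rw [condEnt]
  linarith

theorem mul_log_card_sub_le_mul_condEnt_orbitAverage [MeasurableSingletonClass Ω]
    (hT : Measurable T) {E : Finset Ω} (hE : E.Nonempty) {n : ℕ} (hn : n ≠ 0)
    (hf : InjOn (itinerary hT f n) E)
    (hg : ∀ t, ∀ x ∈ E, ∀ y ∈ E, g (T^[t] x) = g (T^[t] y)) (m : ℕ) :
    m * (Real.log E.card - Real.log (Fintype.card (Fin m → ι))) ≤
      n * condEnt (orbitAverage T (ProbabilityTheory.uniformOn (E : Set Ω)) n)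
        (itinerary hT f m) (itinerary hT g m) := by
  set σ := ProbabilityTheory.uniformOn (E : Set Ω)
  have hσ : IsProbabilityMeasure σ :=
    ProbabilityTheory.isProbabilityMeasure_uniformOn E.finite_toSet hE
  have hshift : ∀ t, shannonEnt (σ.map T^[t]) (itinerary hT f m) ≤
      condEnt (σ.map T^[t]) (itinerary hT f m) (itinerary hT g m) := fun t => by
    obtain ⟨y, hy⟩ := hE
    have := Measure.isProbabilityMeasure_map (μ := σ) (hT.iterate t).aemeasurable
    rw [shannonEnt_map (hT.iterate t), condEnt_map (hT.iterate t)]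
    refine shannonEnt_le_condEnt_of_ae_eq (k := itinerary hT g m (T^[t] y)) ?_
    filter_upwards [ProbabilityTheory.ae_cond_mem E.measurableSet] with x hx
    refine (itinerary_eq_itinerary hT).2 fun i _ => ?_
    simpa only [← Function.iterate_add_apply] using hg (i + t) x hx y hy
  have hm : shannonEnt σ (itinerary hT f m) ≤ Real.log (Fintype.card (Fin m → ι)) :=
    shannonEnt_le_log_card Finset.univ (by simp)
  calc m * (Real.log E.card - Real.log (Fintype.card (Fin m → ι)))
      ≤ m * (shannonEnt σ (itinerary hT f n) - shannonEnt σ (itinerary hT f m)) := by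
        gcongr
        exact log_card_le_shannonEnt_uniformOn hf
    _ ≤ ∑ t ∈ Finset.range n, shannonEnt (σ.map T^[t]) (itinerary hT f m) :=
        mul_shannonEnt_itinerary_sub_le hT f m n
    _ ≤ ∑ t ∈ Finset.range n,
          condEnt (σ.map T^[t]) (itinerary hT f m) (itinerary hT g m) :=
        Finset.sum_le_sum fun t _ => hshift t
    _ ≤ _ := sum_condEnt_map_le_mul_condEnt_orbitAverage hT _ _ hn

end RelativeEntropy

theorem exists_isSep_mul_le_log_card [PseudoMetricSpace X] {T : X → X} {ε b : ℝ} {K : Set X}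
    (h : (b : EReal) < sepEnt T ε K) (k : ℕ) : ∃ n ≥ k, ∃ E : Finset X,
      E.Nonempty ∧ (E : Set X) ⊆ K ∧ IsSep T n ε (E : Set X) ∧ b * n ≤ Real.log E.card := by
  obtain ⟨n, hn, E, hEK, hE, hcard⟩ := exists_isSep_exp_le_card h k
  have hexp : Real.exp (b * n) ≤ E.card := by
    rw [← EReal.coe_natCast, ← EReal.coe_mul, EReal.exp_coe] at hcard
    exact (ENNReal.ofReal_le_iff_le_toReal (ENNReal.natCast_ne_top _)).1 hcard
  have hpos := (Real.exp_pos _).trans_le hexp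
  exact ⟨n, hn, E, Finset.card_pos.1 (by exact_mod_cast hpos), hEK, hE,
    (Real.le_log_iff_exp_le hpos).2 hexp⟩

section LedrappierWalters

variable [MeasurableSpace X] [MeasurableSpace Y] {T : X → X} {S : Y → Y} {π : X → Y} {y : Y}
  {b : ℝ}

theorem ksEntropy_map_add_le [MetricSpace Y] [CompactSpace Y] [BorelSpace Y] {ι : Type*}
    [Fintype ι] {μ : Measure X} [IsProbabilityMeasure μ]
    (hT : Measurable T) (hS : Measurable S) (hπ : Measurable π) (hsemi : Function.Semiconj π T S)
    (hμ : MeasurePreserving T μ μ) {f : SimpleFunc X ι}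
    (h : ∀ (P : Finset (Set Y)) (g : SimpleFunc Y (Option P)), AELocallyConst (μ.map π) g →
      ∀ m : ℕ, m * b ≤ condEnt μ (itinerary hT f m) (itinerary hT (g.comp π hπ) m)) :
    ksEntropy S (μ.map π) + b ≤ ksEntropy T μ := by
  have := Measure.isProbabilityMeasure_map (μ := μ) hπ.aemeasurable
  have hν : MeasurePreserving S (μ.map π) (μ.map π) :=
    (hπ.measurePreserving μ).of_semiconj hμ hsemi hS
  refine EReal.le_of_forall_lt_iff_le.1 fun a ha => ?_
  obtain ⟨a', ha', haa'⟩ := EReal.lt_iff_exists_real_btwn.1 ha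
  suffices hle : ksEntropy S (μ.map π) ≤ ((a - b : ℝ) : EReal) by
    have hab : ((a - b : ℝ) : EReal) + b = a := by rw [← EReal.coe_add, sub_add_cancel]
    exact hab ▸ add_le_add_left hle (b : EReal)
  refine ksEntropy_le hS fun P c => ?_
  by_contra! hlt
  obtain ⟨g, hg, -, hcg⟩ :=
    exists_isSepCode_condEnt_le (μ.map π) c (sub_pos.2 (EReal.coe_lt_coe_iff.1 haa'))
  refine ha'.not_ge (le_ksEntropy hT (f.pair (g.comp π hπ)) fun n => ?_)
  have hc : (a - b) * (n + 1) ≤ shannonEnt (μ.map π) (itinerary hS c (n + 1)) :=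
    (le_div_iff₀ (by positivity)).1 (EReal.coe_le_coe_iff.1 (hlt.le.trans (iInf_le _ n)))
  have hcapprox := shannonEnt_itinerary_le hS hν c g (n + 1)
  have herr : (n + 1) * condEnt (μ.map π) c g ≤ (n + 1) * (a - a') := by gcongr
  have hrel := h P g hg (n + 1)
  rw [shannonEnt_map hπ (f := itinerary hS g (n + 1)), itinerary_comp hT hS hπ hsemi] at hcapprox
  rw [shannonEnt_itinerary_pair]
  push_cast at hcapprox hrel
  linarith

variable [MetricSpace X] [CompactSpace X] [BorelSpace X]

theorem exists_forall_mul_le_condEnt_itinerary [TopologicalSpace Y] [BorelSpace Y]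
    (hT : Continuous T) (hπ : Continuous π) (hsemi : Function.Semiconj π T S) {ε : ℝ} (hε : 0 < ε)
    (hb : (b : EReal) < sepEnt T ε (π ⁻¹' {y})) :
    ∃ μ : Measure X, IsProbabilityMeasure μ ∧ MeasurePreserving T μ μ ∧
      ∃ (s : Finset X) (f : SimpleFunc X (Set s)), ∀ (κ : Type*) [Fintype κ] (g : SimpleFunc Y κ),
        AELocallyConst (μ.map π) g → ∀ m : ℕ, m * b ≤ condEnt μ (itinerary hT.measurable f m)
          (itinerary hT.measurable (g.comp π hπ.measurable) m) := by
  choose n hn E hE hEK hsep hcard using fun k => exists_isSep_mul_le_log_card hb (k + 1)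
  have hσ := fun k => ProbabilityTheory.isProbabilityMeasure_uniformOn (E k).finite_toSet (hE k)
  have hn₀ : ∀ k, n k ≠ 0 := fun k => (Nat.succ_pos k |>.trans_le (hn k)).ne'
  have hnlim : Tendsto n (hyperfilter ℕ) atTop :=
    (tendsto_atTop_mono (fun k => (Nat.le_succ k).trans (hn k)) tendsto_id).mono_left
      Nat.hyperfilter_le_atTop
  obtain ⟨μ, μs, hμs, hlim, hμ⟩ := exists_measurePreserving_tendsto_orbitAverage hT
    (hyperfilter ℕ) (fun k => ProbabilityTheory.uniformOn (E k : Set X)) hn₀ hnlim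
  obtain ⟨s, f, hf, hfdist⟩ := exists_code_dist_le (μ : Measure X) hε
  refine ⟨μ, inferInstance, hμ, s, f, fun κ _ g hg m => ?_⟩
  have hgπ : AELocallyConst (μ : Measure X) (g.comp π hπ.measurable) :=
    hg.comp_continuous (f := g) hπ hπ.measurable.aemeasurable
  have hinj : ∀ k, InjOn (itinerary hT.measurable f (n k)) (E k) := fun k x hx z hz hxz => by
    by_contra hne
    obtain ⟨i, hi, hlt⟩ := hsep k hx hz hne
    exact hlt.not_ge (hfdist _ _ ((itinerary_eq_itinerary _).1 hxz i hi))
  have hconst : ∀ k t, ∀ x ∈ E k, ∀ z ∈ E k, g (π (T^[t] x)) = g (π (T^[t] z)) :=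
    fun k t x hx z hz => by
      have hxz : π x = π z := (hEK k hx).trans (hEK k hz).symm
      rw [(hsemi.iterate_right t).eq, (hsemi.iterate_right t).eq, hxz]
  set c := Real.log (Fintype.card (Fin m → Set s))
  have hcn : Tendsto (fun k => m * b - m * c / n k) (hyperfilter ℕ) (𝓝 (m * b - 0)) :=
    tendsto_const_nhds.sub
      (tendsto_const_nhds.div_atTop (tendsto_natCast_atTop_atTop.comp hnlim))
  rw [sub_zero] at hcn
  refine le_of_tendsto_of_tendsto' hcn (tendsto_condEnt hlim (hf.itinerary hT hμ m)
    (hgπ.itinerary hT hμ m)) fun k => ?_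
  have hbound := mul_log_card_sub_le_mul_condEnt_orbitAverage (g := g.comp π hπ.measurable)
    hT.measurable (hE k) (hn₀ k) (hinj k) (hconst k) m
  have hnpos : (0 : ℝ) < n k := Nat.cast_pos.2 (Nat.pos_of_ne_zero (hn₀ k))
  have hmcard := mul_le_mul_of_nonneg_left (hcard k) m.cast_nonneg
  rw [hμs k, sub_le_iff_le_add, ← mul_le_mul_iff_right₀ hnpos, mul_add, mul_div_cancel₀ _ hnpos.ne']
  linarith

theorem exists_ksEntropy_map_add_le [MetricSpace Y] [CompactSpace Y] [BorelSpace Y]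
    (hT : Continuous T) (hS : Continuous S) (hπ : Continuous π)
    (hsemi : Function.Semiconj π T S) (hb : (b : EReal) < subEnt T (π ⁻¹' {y})) :
    ∃ μ : Measure X, IsProbabilityMeasure μ ∧ MeasurePreserving T μ μ ∧
      ksEntropy S (μ.map π) + b ≤ ksEntropy T μ := by
  obtain ⟨ε, hbε⟩ := lt_iSup_iff.1 hb
  obtain ⟨hε, hbε⟩ := lt_iSup_iff.1 hbε
  obtain ⟨μ, hprob, hμ, s, f, hrel⟩ := exists_forall_mul_le_condEnt_itinerary hT hπ hsemi hε hbε
  exact ⟨μ, hprob, hμ, ksEntropy_map_add_le hT.measurable hS.measurable hπ.measurable hsemi hμ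
    fun P g => hrel (Option P) g⟩

end LedrappierWalters

section Principal

variable [MetricSpace X] [CompactSpace X] [MeasurableSpace X] [BorelSpace X] [MetricSpace Y]
  [CompactSpace Y] [MeasurableSpace Y] [BorelSpace Y] {T : X → X} {S : Y → Y} {π : X → Y}

theorem IsPrincipal.relEnt_le_zero (hpr : IsPrincipal T S π) (hT : Continuous T)
    (hS : Continuous S) (hπ : Continuous π) (hsemi : Function.Semiconj π T S)
    (hfin : subEnt S univ < ⊤) : relEnt T π ≤ 0 := by
  refine iSup_le fun y => ?_
  by_contra! hpos
  obtain ⟨b, hb₀, hb⟩ := EReal.lt_iff_exists_real_btwn.1 hpos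
  obtain ⟨μ, hprob, hμ, hle⟩ := exists_ksEntropy_map_add_le hT hS hπ hsemi hb
  have := Measure.isProbabilityMeasure_map (μ := μ) hπ.aemeasurable
  have hν : MeasurePreserving S (μ.map π) (μ.map π) :=
    (hπ.measurable.measurePreserving μ).of_semiconj hμ hsemi hS.measurable
  rw [hpr μ hprob hμ.map_eq] at hle
  have hbot : ksEntropy S (μ.map π) ≠ ⊥ :=
    (EReal.bot_lt_zero.trans_le (ksEntropy_nonneg hS.measurable)).ne'
  lift ksEntropy S (μ.map π) to ℝ using ⟨(ksEntropy_lt_top hS hν hfin).ne, hbot⟩ with h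
  norm_cast at hle hb₀
  linarith

end Principal

theorem principal_extension_preserves_general {X' X : Type*}
    [MetricSpace X'] [CompactSpace X'] [MeasurableSpace X'] [BorelSpace X']
    [MetricSpace X] [CompactSpace X] [MeasurableSpace X] [BorelSpace X]
    {T' : X' → X'} {T : X → X} {π : X' → X} (hT' : Continuous T') (hT : Continuous T)
    (hπc : Continuous π) (hπs : Function.Surjective π) (hcomm : π ∘ T' = T ∘ π)
    (hpr : IsPrincipal T' T π) (hfin : subEnt T (univ : Set X) < ⊤) :
    (AsympHExpansive T' ↔ AsympHExpansive T) ∧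
    (Lowerable T' ↔ Lowerable T) ∧
    (HerLowerable T' ↔ HerLowerable T) ∧
    (HUL T' ↔ HUL T) := by
  have hsemi : Function.Semiconj π T' T := congrFun hcomm
  have hrel : relEnt T' π ≤ 0 := hpr.relEnt_le_zero hT' hT hπc hsemi hfin
  exact ⟨asympHExpansive_iff_of_relEnt_le_zero hT' hT hπc hπs hsemi hrel,
    lowerable_iff_of_relEnt_le_zero hT' hT hπc hπs hsemi hrel,
    herLowerable_iff_of_relEnt_le_zero hT' hT hπc hπs hsemi hrel,
    hul_iff_of_relEnt_le_zero hT' hT hπc hπs hsemi hrel⟩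

/-- A principal factor map `π : (X',T') → (X,T)` between TDSs with
`h_top(T,X) < ∞` preserves asymptotic `h`-expansiveness, lowerability, hereditary
lowerability and the HUL property. -/
theorem principal_extension_preserves {X' X : Type*}
    [MetricSpace X'] [CompactSpace X'] [MeasurableSpace X'] [BorelSpace X']
    [MetricSpace X] [CompactSpace X] [MeasurableSpace X] [BorelSpace X]
    (T' : X' ≃ₜ X') (T : X ≃ₜ X) (π : X' → X) (hπc : Continuous π)
    (hπs : Function.Surjective π) (hcomm : π ∘ ⇑T' = ⇑T ∘ π)
    (hpr : IsPrincipal (⇑T') (⇑T) π) (hfin : subEnt (⇑T) (univ : Set X) < ⊤) :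
    (AsympHExpansive (⇑T') ↔ AsympHExpansive (⇑T)) ∧
    (Lowerable (⇑T') ↔ Lowerable (⇑T)) ∧
    (HerLowerable (⇑T') ↔ HerLowerable (⇑T)) ∧
    (HUL (⇑T') ↔ HUL (⇑T)) := by
  exact principal_extension_preserves_general T'.continuous T.continuous hπc hπs hcomm hpr hfin
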